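/- arXiv:2209.00317 — 10 statements merged into one kernel-verified Lean document; each statement's English description precedes it below -/
import Mathlib

section
/- Let F be a finite field with q elements and let PSL₂(q) denote the quotient of the special linear group SL₂(F) by its center. Suppose each of the two numbers (q−1)/gcd(q−1, 2) and (q+1)/gcd(q+1, 2) has at most two distinct prime divisors and at most one prime divisor p with p² dividing it (i.e., if p² and p'² both divide the number for primes p, p', then p = p'). Then the power graph of PSL₂(q) is chordal. -/
/-- The power graph of a group: distinct `x` and `y` are adjacent iff one is a power
of the other. -/
def powerGraph (G : Type*) [Group G] : SimpleGraph G :=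
  SimpleGraph.fromRel (fun x y => x ∈ Subgroup.zpowers y)

/-- A graph is chordal if it has no induced cycle on at least 4 vertices. -/
def IsChordal {V : Type*} (Γ : SimpleGraph V) : Prop :=
  ∀ n : ℕ, 4 ≤ n → IsEmpty (SimpleGraph.cycleGraph n ↪g Γ)

/-- The projective special linear group `PSL_n(F)`: the quotient of `SL_n(F)` by its center. -/
abbrev PSL (n : ℕ) (F : Type*) [Field F] :=
  Matrix.SpecialLinearGroup (Fin n) F ⧸ Subgroup.center (Matrix.SpecialLinearGroup (Fin n) F)

/-- `m` has at most two distinct prime divisors and at most one prime divisor with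
multiplicity greater than one. -/
def GoodNumber (m : ℕ) : Prop :=
  m.primeFactors.card ≤ 2 ∧
    ∀ p p' : ℕ, p.Prime → p'.Prime → p ^ 2 ∣ m → p' ^ 2 ∣ m → p = p'

lemma aux_cyc0 {C : Type*} [Group C] [Finite C] [IsCyclic C] (x y : C)
    (h : x ^ orderOf y = 1) : x ∈ Subgroup.zpowers y := by
  classical
  have := Fintype.ofFinite C
  have hsub : (Finset.univ.filter (fun c : C => c ∈ Subgroup.zpowers y)) ⊆
      Finset.univ.filter (fun c : C => c ^ orderOf y = 1) := by
    intro c hc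
    simp only [Finset.mem_filter, Finset.mem_univ, true_and] at hc ⊢
    exact orderOf_dvd_iff_pow_eq_one.1 (orderOf_dvd_of_mem_zpowers hc)
  have hcard : (Finset.univ.filter (fun c : C => c ∈ Subgroup.zpowers y)).card = orderOf y := by
    rw [← Nat.card_zpowers, Nat.card_eq_fintype_card, ← Fintype.card_subtype]
  have := Finset.eq_of_subset_of_card_le hsub
    (by rw [hcard]; exact IsCyclic.card_pow_eq_one_le (orderOf_pos y))
  have hx : x ∈ Finset.univ.filter (fun c : C => c ^ orderOf y = 1) := by simp [h]
  rw [← this] at hx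
  simpa using hx

lemma aux_cyc {G : Type*} [Group G] [Finite G] (g x y : G) (hx : x ∈ Subgroup.zpowers g)
    (hy : y ∈ Subgroup.zpowers g) (h : orderOf x ∣ orderOf y) : x ∈ Subgroup.zpowers y := by
  have := aux_cyc0 (C := Subgroup.zpowers g) ⟨x, hx⟩ ⟨y, hy⟩ (by
    rw [← orderOf_dvd_iff_pow_eq_one]; simpa using h)
  obtain ⟨k, hk⟩ := Subgroup.mem_zpowers_iff.1 this
  exact Subgroup.mem_zpowers_iff.2 ⟨k, by simpa using congrArg Subtype.val hk⟩

lemma aux_good (m a b : ℕ) (hm0 : m ≠ 0) (hm : GoodNumber m) (ha : a ∣ m) (hb : b ∣ m)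
    (hab : ¬ a ∣ b) (hba : ¬ b ∣ a) :
    (∃ p k : ℕ, p.Prime ∧ a = p ^ k) ∨ (∃ p k : ℕ, p.Prime ∧ b = p ^ k) := by
  have ha0 : a ≠ 0 := by rintro rfl; exact hm0 (Nat.eq_zero_of_zero_dvd ha)
  have hb0 : b ≠ 0 := by rintro rfl; exact hm0 (Nat.eq_zero_of_zero_dvd hb)
  have key : ∀ a b : ℕ, a ≠ 0 → b ≠ 0 → ¬ a ∣ b → ∃ p : ℕ, p.Prime ∧ b.factorization p < a.factorization p := by
    intro a b ha0 hb0 h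
    by_contra! hc
    exact h ((Nat.factorization_prime_le_iff_dvd ha0 hb0).1 hc)
  obtain ⟨p, hp, hpl⟩ := key a b ha0 hb0 hab
  obtain ⟨r, hr, hrl⟩ := key b a hb0 ha0 hba
  have hpr : p ≠ r := by rintro rfl; omega
  have hpa : p ∣ a := Nat.dvd_of_factorization_pos (by omega)
  have hrb : r ∣ b := Nat.dvd_of_factorization_pos (by omega)
  have hset : ∀ s : ℕ, s.Prime → s ∣ m → s = p ∨ s = r := by
    intro s hs hsm
    by_contra! hc
    have : ({s, p, r} : Finset ℕ) ⊆ m.primeFactors := by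
      intro t ht
      simp only [Finset.mem_insert, Finset.mem_singleton] at ht
      rcases ht with rfl | rfl | rfl
      · exact Nat.mem_primeFactors.2 ⟨hs, hsm, hm0⟩
      · exact Nat.mem_primeFactors.2 ⟨hp, hpa.trans ha, hm0⟩
      · exact Nat.mem_primeFactors.2 ⟨hr, hrb.trans hb, hm0⟩
    have h3 := Finset.card_le_card this
    rw [Finset.card_eq_three.2 ⟨s, p, r, hc.1, hc.2, hpr, rfl⟩] at h3
    have := hm.1
    omega
  by_cases h1 : p ∣ b
  · by_cases h2 : r ∣ a
    · exfalso
      have e1 := (hp.dvd_iff_one_le_factorization hb0).1 h1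
      have e2 := (hr.dvd_iff_one_le_factorization ha0).1 h2
      exact hpr (hm.2 p r hp hr
        (((hp.pow_dvd_iff_le_factorization ha0).2 (by omega)).trans ha)
        (((hr.pow_dvd_iff_le_factorization hb0).2 (by omega)).trans hb))
    · left
      refine ⟨p, _, hp, Nat.eq_prime_pow_of_unique_prime_dvd ha0 ?_⟩
      intro d hd hda
      rcases hset d hd (hda.trans ha) with h | h
      · exact h
      · subst h; exact absurd hda h2
  · right
    refine ⟨r, _, hr, Nat.eq_prime_pow_of_unique_prime_dvd hb0 ?_⟩
    intro d hd hda
    rcases hset d hd (hda.trans hb) with h | h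
    · subst h; exact absurd hda h1
    · exact h

lemma aux_pp {G : Type*} [Group G] [Finite G] (x y z : G) (p k : ℕ) (hp : p.Prime)
    (ho : orderOf x = p ^ k) (hy : y ∈ Subgroup.zpowers x) (hz : z ∈ Subgroup.zpowers x) :
    y ∈ Subgroup.zpowers z ∨ z ∈ Subgroup.zpowers y := by
  have h1 := orderOf_dvd_of_mem_zpowers hy
  have h2 := orderOf_dvd_of_mem_zpowers hz
  rw [ho] at h1 h2
  obtain ⟨i, -, hi⟩ := (Nat.dvd_prime_pow hp).1 h1
  obtain ⟨j, -, hj⟩ := (Nat.dvd_prime_pow hp).1 h2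
  rcases le_total i j with h | h
  · left; exact aux_cyc x y z hy hz (by rw [hi, hj]; exact pow_dvd_pow _ h)
  · right; exact aux_cyc x z y hz hy (by rw [hi, hj]; exact pow_dvd_pow _ h)

/-- The structural property of the group that is used. -/
def KeyProp (G : Type*) [Group G] : Prop :=
  ∀ x y z : G, x ≠ 1 → x ∈ Subgroup.zpowers y → x ∈ Subgroup.zpowers z →
    y ∈ Subgroup.zpowers z ∨ z ∈ Subgroup.zpowers y ∨
    ∃ (g : G) (m : ℕ), m ≠ 0 ∧ GoodNumber m ∧ g ^ m = 1 ∧ y ∈ Subgroup.zpowers g ∧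
      z ∈ Subgroup.zpowers g

lemma aux_path {G : Type*} [Group G] [Finite G] (hG : KeyProp G) (a : ℕ → G)
    (hn : ∀ i, ¬ (a i ∈ Subgroup.zpowers (a (i+2))) ∧ ¬ (a (i+2) ∈ Subgroup.zpowers (a i)))
    (k : ℕ) (h0 : a k ∈ Subgroup.zpowers (a (k+1)))
    (h2 : a (k+2) ∈ Subgroup.zpowers (a (k+1)))
    (h3 : a (k+2) ∈ Subgroup.zpowers (a (k+3)))
    (h4 : a (k+4) ∈ Subgroup.zpowers (a (k+3))) : False := by
  have hne : a (k+2) ≠ 1 := by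
    intro h
    apply (hn k).2
    rw [h]; exact one_mem _
  rcases hG _ _ _ hne h2 h3 with h | h | ⟨g, m, hm0, hm, hgm, hy, hz⟩
  · exact (hn (k+1)).1 h
  · exact (hn (k+1)).2 h
  · have o1 : orderOf (a (k+1)) ∣ m :=
      (orderOf_dvd_of_mem_zpowers hy).trans (orderOf_dvd_of_pow_eq_one hgm)
    have o3 : orderOf (a (k+3)) ∣ m :=
      (orderOf_dvd_of_mem_zpowers hz).trans (orderOf_dvd_of_pow_eq_one hgm)
    rcases aux_good m _ _ hm0 hm o1 o3 (fun h => (hn (k+1)).1 (aux_cyc g _ _ hy hz h))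
      (fun h => (hn (k+1)).2 (aux_cyc g _ _ hz hy h)) with ⟨p, e, hp, he⟩ | ⟨p, e, hp, he⟩
    · rcases aux_pp _ _ _ p e hp he h0 h2 with h | h
      · exact (hn k).1 h
      · exact (hn k).2 h
    · rcases aux_pp _ _ _ p e hp he h3 h4 with h | h
      · exact (hn (k+2)).1 h
      · exact (hn (k+2)).2 h

open scoped Fin.CommRing in
lemma aux_chordal {G : Type*} [Group G] [Finite G] (hG : KeyProp G) :
    IsChordal (powerGraph G) := by
  intro n hn4
  obtain ⟨k, rfl⟩ : ∃ k, n = k + 2 + 2 := ⟨n - 4, by omega⟩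
  refine ⟨fun f => ?_⟩
  let a : ℕ → G := fun i => f (i : Fin (k+2+2))
  have hA : ∀ i, (powerGraph G).Adj (a i) (a (i+1)) := by
    intro i
    refine f.map_rel_iff.2 ?_
    rw [SimpleGraph.cycleGraph_adj]
    right; push_cast; ring
  have h21 : (2 : Fin (k+2+2)) ≠ 1 := by
    intro h
    have := congrArg Fin.val h
    simp at this
    rw [Nat.mod_eq_of_lt (by omega)] at this
    omega
  have h30 : (3 : Fin (k+2+2)) ≠ 0 := by
    intro h
    have := congrArg Fin.val h
    simp at this
    rw [Nat.mod_eq_of_lt (by omega)] at this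
    omega
  have h20 : (2 : Fin (k+2+2)) ≠ 0 := by
    intro h
    have := congrArg Fin.val h
    simp at this
    rw [Nat.mod_eq_of_lt (by omega)] at this
    omega
  have hN : ∀ i, ¬ (powerGraph G).Adj (a i) (a (i+2)) := by
    intro i h
    have h' := f.map_rel_iff.1 h
    rw [SimpleGraph.cycleGraph_adj] at h'
    push_cast at h'
    rcases h' with h' | h'
    · apply h30
      have : (3 : Fin (k+2+2)) = 1 - ((i : Fin (k+2+2)) - (i + 2)) := by ring
      rw [this, h']; ring
    · apply h21
      rw [← h']; ring
  have hne : ∀ i, a i ≠ a (i+2) := by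
    intro i h
    have h' := f.injective h
    push_cast at h'
    exact h20 (by simpa using h')
  have hn : ∀ i, ¬ (a i ∈ Subgroup.zpowers (a (i+2))) ∧
      ¬ (a (i+2) ∈ Subgroup.zpowers (a i)) := by
    intro i
    have := hN i
    simp only [powerGraph, SimpleGraph.fromRel_adj] at this
    have h2 := hne i
    tauto
  have hadj : ∀ i, a i ∈ Subgroup.zpowers (a (i+1)) ∨ a (i+1) ∈ Subgroup.zpowers (a i) := by
    intro i
    have := hA i
    simp only [powerGraph, SimpleGraph.fromRel_adj] at this
    exact this.2
  have tr : ∀ x y z : G, x ∈ Subgroup.zpowers y → y ∈ Subgroup.zpowers z →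
      x ∈ Subgroup.zpowers z := by
    intro x y z h1 h2
    exact (Subgroup.zpowers_le.2 h2) h1
  have up : ∀ i, a i ∈ Subgroup.zpowers (a (i+1)) →
      a (i+2) ∈ Subgroup.zpowers (a (i+1)) := by
    intro i h
    rcases hadj (i+1) with h' | h'
    · exact absurd (tr _ _ _ h h') (hn i).1
    · exact h'
  have dn : ∀ i, a (i+1) ∈ Subgroup.zpowers (a i) →
      a (i+1) ∈ Subgroup.zpowers (a (i+2)) := by
    intro i h
    rcases hadj (i+1) with h' | h'
    · exact h'
    · exact absurd (tr _ _ _ h' h) (hn i).2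
  have fin : ∀ i, a i ∈ Subgroup.zpowers (a (i+1)) → False := by
    intro i h
    have e2 := up i h
    have e3 := dn (i+1) e2
    have e4 := up (i+2) e3
    exact aux_path hG a hn i h e2 e3 e4
  rcases hadj 0 with h | h
  · exact fin 0 h
  · exact fin 1 (dn 0 h)

section
open Matrix

lemma sl_center_of_scalar {F K : Type*} [Field F] [Field K]
    (φ : SpecialLinearGroup (Fin 2) F →* Matrix (Fin 2) (Fin 2) K)
    (hinj : Function.Injective φ) (Z : SpecialLinearGroup (Fin 2) F) (c : K)
    (h : φ Z = Matrix.scalar (Fin 2) c) : Z ∈ Subgroup.center (SpecialLinearGroup (Fin 2) F) := by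
  rw [Subgroup.mem_center_iff]
  intro W
  apply hinj
  rw [map_mul, map_mul, h]
  exact (Matrix.scalar_commute c (fun r => Commute.all _ _) _).symm.eq

lemma sl_diag_comm {K : Type*} [Field K] (M N : Matrix (Fin 2) (Fin 2) K)
    (h01 : M 0 1 = 0) (h10 : M 1 0 = 0) (hne : M 0 0 ≠ M 1 1) (hc : M * N = N * M) :
    N 0 1 = 0 ∧ N 1 0 = 0 := by
  have e1 := congrFun (congrFun hc 0) 1
  have e2 := congrFun (congrFun hc 1) 0
  simp only [Matrix.mul_apply, Fin.sum_univ_two, h01, h10] at e1 e2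
  have hne' : M 0 0 - M 1 1 ≠ 0 := sub_ne_zero.2 hne
  constructor
  · apply (mul_eq_zero.1 (show (M 0 0 - M 1 1) * N 0 1 = 0 by linear_combination e1)).resolve_left hne'
  · apply (mul_eq_zero.1 (show (M 0 0 - M 1 1) * N 1 0 = 0 by linear_combination -e2)).resolve_left hne'

lemma sl_diag_case {F K : Type*} [Field F] [Fintype F] [Field K] [Algebra F K] (q : ℕ)
    (hq : Fintype.card F = q)
    (h1 : GoodNumber ((q - 1) / Nat.gcd (q - 1) 2))
    (h2 : GoodNumber ((q + 1) / Nat.gcd (q + 1) 2))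
    (φ : SpecialLinearGroup (Fin 2) F →* Matrix (Fin 2) (Fin 2) K)
    (hinj : Function.Injective φ) (hdet : ∀ Z, (φ Z).det = 1)
    (htr : ∀ Z, ∃ t : F, (φ Z).trace = algebraMap F K t)
    (X Y Y' : SpecialLinearGroup (Fin 2) F)
    (h01 : φ Y 0 1 = 0) (h10 : φ Y 1 0 = 0) (hne : φ Y 0 0 ≠ φ Y 1 1)
    (hXY : Y * X = X * Y) (hXY' : X * Y' = Y' * X)
    (hX : X ∉ Subgroup.center (SpecialLinearGroup (Fin 2) F)) :
    ∃ (Z : SpecialLinearGroup (Fin 2) F) (m : ℕ), m ≠ 0 ∧ GoodNumber m ∧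
      Z ^ m ∈ Subgroup.center (SpecialLinearGroup (Fin 2) F) ∧
      Y ∈ Subgroup.zpowers Z ∧ Y' ∈ Subgroup.zpowers Z := by
  have hdiag : ∀ Z, φ Z 0 1 = 0 → φ Z 1 0 = 0 → φ Z 0 0 * φ Z 1 1 = 1 := by
    intro Z a b
    have := hdet Z
    rw [Matrix.det_fin_two, a, b] at this
    simpa using this
  let D : Subgroup (SpecialLinearGroup (Fin 2) F) :=
    { carrier := {Z | φ Z 0 1 = 0 ∧ φ Z 1 0 = 0}
      mul_mem' := by
        rintro a b ⟨ha, ha'⟩ ⟨hb, hb'⟩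
        simp [Matrix.mul_apply, Fin.sum_univ_two, ha, ha', hb, hb']
      one_mem' := by simp
      inv_mem' := by
        rintro a ⟨ha, ha'⟩
        have h := hdiag a ha ha'
        have e : φ a * φ a⁻¹ = 1 := by rw [← map_mul]; simp
        have e1 := congrFun (congrFun e 0) 1
        have e2 := congrFun (congrFun e 1) 0
        simp only [Matrix.mul_apply, Fin.sum_univ_two, ha, ha', zero_mul, add_zero, zero_add] at e1 e2
        simp at e1 e2
        have n0 : φ a 0 0 ≠ 0 := left_ne_zero_of_mul_eq_one h
        have n1 : φ a 1 1 ≠ 0 := right_ne_zero_of_mul_eq_one h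
        exact ⟨e1.resolve_left n0, e2.resolve_left n1⟩ }
  let χ : D →* K :=
    { toFun := fun Z => φ Z.1 0 0
      map_one' := by simp
      map_mul' := by
        rintro ⟨a, ha, ha'⟩ ⟨b, hb, hb'⟩
        simp [Matrix.mul_apply, Fin.sum_univ_two, ha] }
  have hχ : Function.Injective χ := by
    rintro ⟨a, ha, ha'⟩ ⟨b, hb, hb'⟩ hab
    have hab' : φ a 0 0 = φ b 0 0 := hab
    have e1 := hdiag a ha ha'
    have e2 := hdiag b hb hb'
    have n0 : φ a 0 0 ≠ 0 := left_ne_zero_of_mul_eq_one e1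
    apply Subtype.ext
    apply hinj
    ext i j
    fin_cases i <;> fin_cases j
    · exact hab
    · exact ha.trans hb.symm
    · exact ha'.trans hb'.symm
    · rw [← hab', ← e1] at e2
      exact (mul_left_cancel₀ n0 e2).symm
  have hcyc : IsCyclic D := isCyclic_of_injective_ringHom χ hχ
  have hXD : X ∈ D := sl_diag_comm (φ Y) (φ X) h01 h10 hne (by rw [← map_mul, hXY, map_mul])
  have hXne : φ X 0 0 ≠ φ X 1 1 := by
    intro h
    apply hX
    apply sl_center_of_scalar φ hinj X (φ X 0 0)
    ext i j
    fin_cases i <;> fin_cases j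
    · simp
    · simpa using hXD.1
    · simpa using hXD.2
    · simpa using h.symm
  have hYD' : Y' ∈ D := sl_diag_comm (φ X) (φ Y') hXD.1 hXD.2 hXne
    (by rw [← map_mul, hXY', map_mul])
  obtain ⟨⟨Z, hZ⟩, hgen⟩ := hcyc.exists_generator
  have mem : ∀ W, W ∈ D → W ∈ Subgroup.zpowers Z := by
    intro W hW
    obtain ⟨k, hk⟩ := Subgroup.mem_zpowers_iff.1 (hgen ⟨W, hW⟩)
    exact Subgroup.mem_zpowers_iff.2 ⟨k, by simpa using congrArg Subtype.val hk⟩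
  have hq2 : 2 ≤ q := by rw [← hq]; exact Fintype.one_lt_card
  set c := φ Z 0 0 with hc
  have hcd := hdiag Z hZ.1 hZ.2
  rw [← hc] at hcd
  have hc0 : c ≠ 0 := left_ne_zero_of_mul_eq_one hcd
  have hroot : c ^ (q - 1) = 1 ∨ c ^ (q + 1) = 1 := by
    obtain ⟨t, ht⟩ := htr Z
    rw [Matrix.trace_fin_two, ← hc] at ht
    have r1 : c ^ 2 + 1 = algebraMap F K t * c := by
      rw [← ht]; linear_combination -hcd
    obtain ⟨p, hpc⟩ := CharP.exists F
    have := charP_of_injective_algebraMap (algebraMap F K).injective p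
    obtain ⟨n, hp, hn⟩ := FiniteField.card F p
    have := Fact.mk hp
    have hq' : q = p ^ (n : ℕ) := by rw [← hq, hn]
    have r2 : (c ^ q) ^ 2 + 1 = algebraMap F K t * c ^ q := by
      have := congrArg (· ^ q) r1
      simp only [mul_pow, ← map_pow] at this
      rw [← hq, FiniteField.pow_card, hq, hq', add_pow_char_pow] at this
      rw [hq', ← this]; ring
    have r3 : (c ^ q - c) * (c ^ q * c - 1) = 0 := by
      linear_combination c * r2 - c ^ q * r1
    rcases mul_eq_zero.1 r3 with h | h
    · left
      have : c ^ (q - 1) * c = 1 * c := by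
        rw [← pow_succ, Nat.sub_add_cancel (by omega)]; linear_combination h
      exact mul_right_cancel₀ hc0 this
    · right; rw [pow_succ]; linear_combination h
  have hfin : ∀ N : ℕ, N ≠ 0 → c ^ N = 1 → N / Nat.gcd N 2 ≠ 0 ∧
      Z ^ (N / Nat.gcd N 2) ∈ Subgroup.center (SpecialLinearGroup (Fin 2) F) := by
    intro N hN hcN
    set m := N / Nat.gcd N 2 with hm
    have hmN : m * Nat.gcd N 2 = N := Nat.div_mul_cancel (Nat.gcd_dvd_left _ _)
    refine ⟨by rintro h; rw [h] at hmN; omega, ?_⟩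
    have hsq : c ^ m * c ^ m = 1 := by
      have : Nat.gcd N 2 ∣ 2 := Nat.gcd_dvd_right _ _
      obtain ⟨k, hk⟩ := this
      have : m + m = N * k := by rw [← hmN, mul_assoc, ← hk]; ring
      rw [← pow_add, this, pow_mul, hcN, one_pow]
    have hZm : Z ^ m ∈ D := D.pow_mem hZ m
    have hcm : φ (Z ^ m) 0 0 = c ^ m := by
      have := map_pow χ ⟨Z, hZ⟩ m
      exact this
    have e := hdiag _ hZm.1 hZm.2
    rw [hcm] at e
    have n0 : c ^ m ≠ 0 := pow_ne_zero _ hc0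
    have e' : φ (Z ^ m) 1 1 = c ^ m := mul_left_cancel₀ n0 (e.trans hsq.symm)
    apply sl_center_of_scalar φ hinj _ (c ^ m)
    ext i j
    fin_cases i <;> fin_cases j
    · simpa using hcm
    · simpa using hZm.1
    · simpa using hZm.2
    · simpa using e'
  rcases hroot with h | h
  · obtain ⟨a, b⟩ := hfin (q - 1) (by omega) h
    exact ⟨Z, _, a, h1, b, mem _ ⟨h01, h10⟩, mem _ hYD'⟩
  · obtain ⟨a, b⟩ := hfin (q + 1) (by omega) h
    exact ⟨Z, _, a, h2, b, mem _ ⟨h01, h10⟩, mem _ hYD'⟩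

lemma sl_dichotomy {F : Type*} [Field F] [Fintype F] (Y : SpecialLinearGroup (Fin 2) F) :
    (∃ p : ℕ, p.Prime ∧ Y ^ p ∈ Subgroup.center (SpecialLinearGroup (Fin 2) F)) ∨
    ∃ φ : SpecialLinearGroup (Fin 2) F →* Matrix (Fin 2) (Fin 2) (AlgebraicClosure F),
      Function.Injective φ ∧ (∀ Z, (φ Z).det = 1) ∧
      (∀ Z, ∃ t : F, (φ Z).trace = algebraMap F (AlgebraicClosure F) t) ∧
      φ Y 0 1 = 0 ∧ φ Y 1 0 = 0 ∧ φ Y 0 0 ≠ φ Y 1 1 := by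
  set K := AlgebraicClosure F
  let ψ : SpecialLinearGroup (Fin 2) F →* Matrix (Fin 2) (Fin 2) K :=
    (SpecialLinearGroup.toGL.comp (SpecialLinearGroup.map (algebraMap F K)) |> (Units.coeHom _).comp)
  have hψ : ∀ Z i j, ψ Z i j = algebraMap F K (Z.1 i j) := fun Z i j => rfl
  have hψinj : Function.Injective ψ := by
    intro a b hab
    apply Subtype.ext
    ext i j
    apply (algebraMap F K).injective
    rw [← hψ, ← hψ, hab]
  have hψdet : ∀ Z, (ψ Z).det = 1 := fun Z => (SpecialLinearGroup.map (algebraMap F K) Z).2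
  have hψtr : ∀ Z, ∃ t : F, (ψ Z).trace = algebraMap F K t := by
    intro Z
    exact ⟨Z.1 0 0 + Z.1 1 1, by rw [Matrix.trace_fin_two, hψ, hψ, map_add]⟩
  set M := ψ Y with hM
  have hMdet : M 0 0 * M 1 1 - M 0 1 * M 1 0 = 1 := by
    rw [← Matrix.det_fin_two]; exact hψdet Y
  obtain ⟨l, hl⟩ := IsAlgClosed.exists_root M.charpoly (by
    rw [Matrix.charpoly_degree_eq_dim]; simp)
  rw [Polynomial.IsRoot, Matrix.eval_charpoly, Matrix.det_fin_two] at hl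
  simp at hl
  set u := M 0 0 + M 1 1 - l with hu
  have hlu : l * u = 1 := by rw [hu]; linear_combination hMdet - hl
  by_cases heq : l = u
  · left
    obtain ⟨p, hpc⟩ := CharP.exists F
    have : CharP K p := charP_of_injective_algebraMap (algebraMap F K).injective p
    obtain ⟨n, hp, hn⟩ := FiniteField.card F p
    have := Fact.mk hp
    refine ⟨p, hp, sl_center_of_scalar ψ hψinj _ (l ^ p) ?_⟩
    have hs : (M - Matrix.scalar (Fin 2) l) ^ 2 = 0 := by
      have hu2 : M 0 0 + M 1 1 - 2 * l = 0 := by rw [hu] at heq; linear_combination -heq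
      ext i j
      fin_cases i <;> fin_cases j <;> simp [pow_two, Matrix.mul_apply, Fin.sum_univ_two]
      · linear_combination (M 0 0 - l) * hu2 - hl
      · linear_combination (M 0 1) * hu2
      · linear_combination (M 1 0) * hu2
      · linear_combination (M 1 1 - l) * hu2 - hl
    have hs' : (M - Matrix.scalar (Fin 2) l) ^ p = 0 := pow_eq_zero_of_le hp.two_le hs
    rw [sub_pow_char_of_commute p (Matrix.scalar_commute l (fun r => Commute.all _ _) M).symm,
      sub_eq_zero] at hs'
    rw [map_pow, ← hM, hs', map_pow]
  · right
    have hdl : (M - Matrix.scalar (Fin 2) l).det = 0 := by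
      rw [Matrix.det_fin_two]; simp; linear_combination hl
    have hdu : (M - Matrix.scalar (Fin 2) u).det = 0 := by
      rw [Matrix.det_fin_two]; simp; rw [hu]; linear_combination hl
    obtain ⟨v, hv0, hv⟩ := Matrix.exists_mulVec_eq_zero_iff.2 hdl
    obtain ⟨w, hw0, hw⟩ := Matrix.exists_mulVec_eq_zero_iff.2 hdu
    have v1 := congrFun hv 0
    have v2 := congrFun hv 1
    have w1 := congrFun hw 0
    have w2 := congrFun hw 1
    simp [Matrix.mulVec, dotProduct, Fin.sum_univ_two] at v1 v2 w1 w2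
    have hlu' : l - u ≠ 0 := sub_ne_zero.2 heq
    let P : Matrix (Fin 2) (Fin 2) K := !![v 0, w 0; v 1, w 1]
    have hP : P.det ≠ 0 := by
      intro h
      rw [Matrix.det_fin_two] at h
      simp [P] at h
      have z00 : v 0 * w 0 = 0 := (mul_eq_zero.1 (show (l - u) * (v 0 * w 0) = 0 by
        linear_combination -w 0 * v1 + v 0 * w1 - M 0 1 * h)).resolve_left hlu'
      have z11 : v 1 * w 1 = 0 := (mul_eq_zero.1 (show (l - u) * (v 1 * w 1) = 0 by
        linear_combination -w 1 * v2 + v 1 * w2 + M 1 0 * h)).resolve_left hlu'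
      have z01 : v 0 * w 1 = 0 := (mul_eq_zero.1 (show (l - u) * (v 0 * w 1) = 0 by
        linear_combination -w 1 * v1 + v 1 * w1 + (M 0 0 - u) * h)).resolve_left hlu'
      have z10 : v 1 * w 0 = 0 := by linear_combination z01 - h
      have hv' : v 0 ≠ 0 ∨ v 1 ≠ 0 := by
        by_contra! hc
        apply hv0; ext i; fin_cases i
        · exact hc.1
        · exact hc.2
      apply hw0
      ext i
      rcases hv' with hv' | hv' <;> fin_cases i
      · exact (mul_eq_zero.1 z00).resolve_left hv'
      · exact (mul_eq_zero.1 z01).resolve_left hv'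
      · exact (mul_eq_zero.1 z10).resolve_left hv'
      · exact (mul_eq_zero.1 z11).resolve_left hv'
    have hPu : IsUnit P.det := isUnit_iff_ne_zero.2 hP
    have hPP : P * P⁻¹ = 1 := Matrix.mul_nonsing_inv _ hPu
    have hPP' : P⁻¹ * P = 1 := Matrix.nonsing_inv_mul _ hPu
    let φ : SpecialLinearGroup (Fin 2) F →* Matrix (Fin 2) (Fin 2) K :=
      { toFun := fun Z => P⁻¹ * ψ Z * P
        map_one' := by rw [map_one, mul_one, hPP']
        map_mul' := by
          intro a b
          rw [map_mul]
          calc P⁻¹ * (ψ a * ψ b) * P = P⁻¹ * ψ a * 1 * ψ b * P := by simp only [mul_assoc, one_mul]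
            _ = _ := by rw [← hPP]; simp only [mul_assoc] }
    have hφ : ∀ Z, φ Z = P⁻¹ * ψ Z * P := fun Z => rfl
    have hφY : φ Y = !![l, 0; 0, u] := by
      have : M * P = P * !![l, 0; 0, u] := by
        ext i j
        fin_cases i <;> fin_cases j <;> simp [P, Matrix.mul_apply, Fin.sum_univ_two]
        · linear_combination v1
        · linear_combination w1
        · linear_combination v2
        · linear_combination w2
      rw [hφ, mul_assoc, ← hM, this, ← mul_assoc, hPP', one_mul]
    refine ⟨φ, ?_, ?_, ?_, by rw [hφY]; simp, by rw [hφY]; simp, by rw [hφY]; simpa using heq⟩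
    · intro a b hab
      rw [hφ, hφ] at hab
      apply hψinj
      have := congrArg (fun N => P * N * P⁻¹) hab
      simp only [← mul_assoc, hPP, one_mul] at this
      simpa only [mul_assoc, hPP, mul_one] using this
    · intro Z
      rw [hφ, Matrix.det_mul, Matrix.det_mul, hψdet, mul_one, ← Matrix.det_mul, hPP', Matrix.det_one]
    · intro Z
      obtain ⟨t, ht⟩ := hψtr Z
      exact ⟨t, by rw [hφ, Matrix.trace_mul_comm, ← mul_assoc, hPP, one_mul, ht]⟩

lemma psl_prime_case {G : Type*} [Group G] (x y : G) (p : ℕ) (hp : p.Prime) (hy : y ^ p = 1)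
    (hx1 : x ≠ 1) (hx : x ∈ Subgroup.zpowers y) : y ∈ Subgroup.zpowers x := by
  obtain ⟨k, rfl⟩ := Subgroup.mem_zpowers_iff.1 hx
  have hk : ¬ (p : ℤ) ∣ k := by
    rintro ⟨j, rfl⟩
    apply hx1
    rw [_root_.zpow_mul, zpow_natCast, hy, _root_.one_zpow]
  have hcop : IsCoprime (p : ℤ) k :=
    (Nat.prime_iff_prime_int.1 hp).coprime_iff_not_dvd.2 hk
  obtain ⟨a, b, hab⟩ := hcop
  refine Subgroup.mem_zpowers_iff.2 ⟨b, ?_⟩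
  rw [← _root_.zpow_mul]
  have : k * b = 1 - (p : ℤ) * a := by linear_combination hab
  rw [this, _root_.zpow_sub, _root_.zpow_mul, zpow_natCast, hy]; simp

lemma psl_key (F : Type*) [Field F] [Fintype F] (q : ℕ) (hq : Fintype.card F = q)
    (h1 : GoodNumber ((q - 1) / Nat.gcd (q - 1) 2))
    (h2 : GoodNumber ((q + 1) / Nat.gcd (q + 1) 2)) : KeyProp (PSL 2 F) := by
  intro x y z hx1 hxy hxz
  obtain ⟨X, rfl⟩ := QuotientGroup.mk_surjective x
  obtain ⟨Y, rfl⟩ := QuotientGroup.mk_surjective y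
  obtain ⟨Z, rfl⟩ := QuotientGroup.mk_surjective z
  have hX : X ∉ Subgroup.center (SpecialLinearGroup (Fin 2) F) := by
    intro h; exact hx1 ((QuotientGroup.eq_one_iff X).2 h)
  have comm : ∀ W : SpecialLinearGroup (Fin 2) F,
      (X : PSL 2 F) ∈ Subgroup.zpowers (W : PSL 2 F) → W * X = X * W := by
    intro W hW
    obtain ⟨k, hk⟩ := Subgroup.mem_zpowers_iff.1 hW
    have hk' : ((W ^ k : SpecialLinearGroup (Fin 2) F) : PSL 2 F) = (X : PSL 2 F) := hk
    have h := QuotientGroup.eq.1 hk'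
    have hc := Subgroup.mem_center_iff.1 h W
    have : X = W ^ k * ((W ^ k)⁻¹ * X) := by group
    have c1 : Commute W (W ^ k) := (Commute.refl W).zpow_right k
    have c2 : Commute W ((W ^ k)⁻¹ * X) := hc
    rw [this]
    exact (c1.mul_right c2).eq
  rcases sl_dichotomy Y with ⟨p, hp, hYp⟩ | ⟨φ, hinj, hdet, htr, a, b, c⟩
  · left
    have hy : (Y : PSL 2 F) ^ p = 1 := (QuotientGroup.eq_one_iff (Y ^ p)).2 hYp
    exact (Subgroup.zpowers_le.2 hxz) (psl_prime_case _ _ p hp hy hx1 hxy)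
  · right; right
    obtain ⟨W, m, hm0, hm, hW, hYW, hZW⟩ := sl_diag_case q hq h1 h2 φ hinj hdet htr X Y Z a b c
      (comm Y hxy) (comm Z hxz).symm hX
    refine ⟨(W : PSL 2 F), m, hm0, hm, (QuotientGroup.eq_one_iff (W ^ m)).2 hW, ?_, ?_⟩
    · obtain ⟨k, rfl⟩ := Subgroup.mem_zpowers_iff.1 hYW
      exact Subgroup.mem_zpowers_iff.2 ⟨k, rfl⟩
    · obtain ⟨k, rfl⟩ := Subgroup.mem_zpowers_iff.1 hZW
      exact Subgroup.mem_zpowers_iff.2 ⟨k, rfl⟩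

end

theorem stmt6 (F : Type*) [Field F] [Fintype F] (q : ℕ) (hq : Fintype.card F = q)
    (h1 : GoodNumber ((q - 1) / Nat.gcd (q - 1) 2))
    (h2 : GoodNumber ((q + 1) / Nat.gcd (q + 1) 2)) :
    IsChordal (powerGraph (PSL 2 F)) := by
  exact aux_chordal (psl_key F q hq h1 h2)
end

section
/- Let F be a finite field with q elements and let n ≥ 3. The power graph of PSL_n(q), the quotient of SL_n(F) by its center, is chordal if and only if n = 3 and q ∈ {2, 4}. -/
theorem gcd_mem {G : Type*} [Group G] (a : G) (N i : ℕ) (h : a ^ N = 1) :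
    a ^ (Nat.gcd i N) ∈ Subgroup.zpowers (a ^ i) := by
  refine ⟨Nat.gcdA i N, ?_⟩
  have h1 := Nat.gcd_eq_gcd_ab i N
  have : a ^ (Nat.gcd i N) = a ^ ((Nat.gcd i N : ℕ) : ℤ) := (zpow_natCast _ _).symm
  rw [this, h1, zpow_add, zpow_mul, zpow_mul, zpow_natCast, zpow_natCast, h]
  simp

theorem pp_comparable {G : Type*} [Group G] (a x y : G) (p k : ℕ) (hp : p.Prime)
    (h : a ^ (p ^ k) = 1) (hx : x ∈ Subgroup.zpowers a) (hy : y ∈ Subgroup.zpowers a) :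
    x ∈ Subgroup.zpowers y ∨ y ∈ Subgroup.zpowers x := by
  have hf : IsOfFinOrder a := isOfFinOrder_iff_pow_eq_one.2 ⟨p ^ k, pow_pos hp.pos _, h⟩
  obtain ⟨i, rfl⟩ := hf.mem_powers_iff_mem_zpowers.2 hx
  obtain ⟨j, rfl⟩ := hf.mem_powers_iff_mem_zpowers.2 hy
  have main : ∀ i j u v, u ≤ v → Nat.gcd i (p ^ k) = p ^ u → Nat.gcd j (p ^ k) = p ^ v →
      a ^ j ∈ Subgroup.zpowers (a ^ i) := by
    intro i j u v huv hi hj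
    have h1 := gcd_mem a (p ^ k) i h
    have h2 : Nat.gcd i (p ^ k) ∣ j := by
      rw [hi]; exact (pow_dvd_pow p huv).trans (hj ▸ Nat.gcd_dvd_left _ _)
    obtain ⟨c, hc⟩ := h2
    rw [hc, pow_mul]
    exact Subgroup.pow_mem _ h1 c
  obtain ⟨u, -, hu⟩ := (Nat.dvd_prime_pow hp).1 (Nat.gcd_dvd_right i (p ^ k))
  obtain ⟨v, -, hv⟩ := (Nat.dvd_prime_pow hp).1 (Nat.gcd_dvd_right j (p ^ k))
  rcases le_total u v with huv | huv
  · exact Or.inr (main i j u v huv hu hv)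
  · exact Or.inl (main j i v u huv hv hu)

theorem no_P4 {G : Type*} [Group G]
    (h : ∀ a : G, ∃ p k : ℕ, p.Prime ∧ a ^ (p ^ k) = 1) (a b c d : G)
    (e01 : a ∈ Subgroup.zpowers b ∨ b ∈ Subgroup.zpowers a)
    (e12 : b ∈ Subgroup.zpowers c ∨ c ∈ Subgroup.zpowers b)
    (e23 : c ∈ Subgroup.zpowers d ∨ d ∈ Subgroup.zpowers c)
    (n02' : ¬ (a ∈ Subgroup.zpowers c ∨ c ∈ Subgroup.zpowers a))
    (n13' : ¬ (b ∈ Subgroup.zpowers d ∨ d ∈ Subgroup.zpowers b)) : False := by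
  have tr : ∀ x y z : G, x ∈ Subgroup.zpowers y → y ∈ Subgroup.zpowers z →
      x ∈ Subgroup.zpowers z := fun x y z hxy hyz =>
    (Subgroup.zpowers_le.2 hyz) hxy
  have cmp : ∀ a x y : G, x ∈ Subgroup.zpowers a → y ∈ Subgroup.zpowers a →
      x ∈ Subgroup.zpowers y ∨ y ∈ Subgroup.zpowers x := by
    intro a x y hx hy
    obtain ⟨p, k, hp, hk⟩ := h a
    exact pp_comparable a x y p k hp hk hx hy
  have h1 := tr a b c
  have h2 := tr c b a
  have h3 := tr b c d
  have h4 := tr d c b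
  have h5 := cmp b a c
  have h6 := cmp c b d
  have h7 := tr c b a
  clear h tr cmp
  grind

theorem chordal_of_eppo {G : Type*} [Group G]
    (h : ∀ a : G, ∃ p k : ℕ, p.Prime ∧ a ^ (p ^ k) = 1) : IsChordal (powerGraph G) := by
  intro n hn
  obtain ⟨m, rfl⟩ := Nat.exists_eq_add_of_le' hn
  refine ⟨fun f => ?_⟩
  have key : ∀ i j : Fin (m + 4), (SimpleGraph.cycleGraph (m + 4)).Adj i j ↔
      f i ≠ f j ∧ (f i ∈ Subgroup.zpowers (f j) ∨ f j ∈ Subgroup.zpowers (f i)) := by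
    intro i j
    rw [← f.map_adj_iff]
    simp [powerGraph, SimpleGraph.fromRel_adj]
  have ne : ∀ i j : Fin (m + 4), i ≠ j → f i ≠ f j := fun i j hij e => hij (f.injective e)
  let v : ℕ → Fin (m + 4) := fun i => Fin.ofNat _ i
  have val : ∀ i, i < 4 → (v i).val = i := fun i hi => Nat.mod_eq_of_lt (by omega)
  have cg : ∀ i j, i < 4 → j < 4 → ((SimpleGraph.cycleGraph (m + 4)).Adj (v i) (v j) ↔
      ((m + 4 - j + i) % (m + 4) = 1 ∨ (m + 4 - i + j) % (m + 4) = 1)) := by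
    intro i j hi hj
    rw [SimpleGraph.cycleGraph_adj', Fin.sub_def, Fin.sub_def]
    simp only [val i hi, val j hj]
  have sm : ∀ x, (m + 4 + x) % (m + 4) = x % (m + 4) := fun x => Nat.add_mod_left _ _
  have nv : ∀ i j, i < 4 → j < 4 → i ≠ j → v i ≠ v j := by
    intro i j hi hj hij e
    exact hij (by rw [← val i hi, ← val j hj, e])
  have e01 := (key (v 0) (v 1)).1 ((cg 0 1 (by omega) (by omega)).2 (Or.inr (by
    rw [Nat.sub_zero, sm]; exact Nat.mod_eq_of_lt (by omega))))
  have e12 := (key (v 1) (v 2)).1 ((cg 1 2 (by omega) (by omega)).2 (Or.inr (by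
    rw [show m + 4 - 1 + 2 = m + 4 + 1 by omega, sm]; exact Nat.mod_eq_of_lt (by omega))))
  have e23 := (key (v 2) (v 3)).1 ((cg 2 3 (by omega) (by omega)).2 (Or.inr (by
    rw [show m + 4 - 2 + 3 = m + 4 + 1 by omega, sm]; exact Nat.mod_eq_of_lt (by omega))))
  have n02 := mt (key (v 0) (v 2)).2 (mt (cg 0 2 (by omega) (by omega)).1 (by
    rw [show m + 4 - 0 + 2 = m + 4 + 2 by omega, sm, Nat.mod_eq_of_lt (by omega),
      Nat.mod_eq_of_lt (by omega)]; omega))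
  have n13 := mt (key (v 1) (v 3)).2 (mt (cg 1 3 (by omega) (by omega)).1 (by
    rw [show m + 4 - 1 + 3 = m + 4 + 2 by omega, sm, Nat.mod_eq_of_lt (by omega),
      Nat.mod_eq_of_lt (by omega)]; omega))
  have d02 := ne _ _ (nv 0 2 (by omega) (by omega) (by omega))
  have d13 := ne _ _ (nv 1 3 (by omega) (by omega) (by omega))
  exact no_P4 h _ _ _ _ e01.2 e12.2 e23.2 (fun h => n02 ⟨d02, h⟩) (fun h => n13 ⟨d13, h⟩)

def ole {k : ℕ} (a b : Option (Fin k)) : Bool := a == none || a == b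

def oval {G : Type*} [Group G] {k : ℕ} (t : Fin k → G) : Option (Fin k) → G
  | none => 1
  | some i => t i

theorem oval_mem {G : Type*} [Group G] {k : ℕ} (t : Fin (k + 2) → G)
    (ht : ∀ i j, t i ∈ Subgroup.zpowers (t j) → i = j) (a b : Option (Fin (k + 2))) :
    oval t a ∈ Subgroup.zpowers (oval t b) ↔ ole a b = true := by
  have h1 : ∀ i j, t i ∈ Subgroup.zpowers (t j) ↔ i = j :=
    fun i j => ⟨ht i j, by rintro rfl; exact Subgroup.mem_zpowers _⟩
  have h2 : ∀ i, t i ≠ 1 := by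
    intro i hi
    obtain ⟨j, hj⟩ := exists_ne i
    exact hj (ht i j (hi ▸ Subgroup.one_mem _)).symm
  rcases a with _ | i <;> rcases b with _ | j <;> simp [oval, ole, h1, h2]

theorem part_pow {G : Type*} [Group G] (T S : G) (p m e : ℕ) (hT : T ^ p = 1) (hS : S ^ m = 1)
    (hc : Commute T S) (h1 : e ≡ 1 [MOD p]) (h0 : e ≡ 0 [MOD m]) (j : ℤ) :
    ((T * S) ^ j) ^ e = T ^ j := by
  have a1 : T ^ e = T := by
    have := pow_eq_pow_iff_modEq (x := T) (m := 1) (n := e)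
    rw [← pow_one T, ← pow_mul, one_mul]
    exact pow_eq_pow_iff_modEq.2 (h1.of_dvd (orderOf_dvd_of_pow_eq_one hT))
  have a2 : S ^ e = 1 := by
    rw [← pow_zero S]
    exact pow_eq_pow_iff_modEq.2 (h0.of_dvd (orderOf_dvd_of_pow_eq_one hS))
  rw [← zpow_natCast, ← zpow_mul, mul_comm, zpow_mul, zpow_natCast, hc.mul_pow, a1, a2, mul_one]

theorem tsprod_mem {G : Type*} [Group G] (T S T' S' : G) (p m : ℕ) (hpm : Nat.Coprime p m)
    (hT : T ^ p = 1) (hS : S ^ m = 1) (hT' : T' ^ p = 1) (hS' : S' ^ m = 1)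
    (hc : Commute T S) (hc' : Commute T' S') :
    T * S ∈ Subgroup.zpowers (T' * S') ↔
      T ∈ Subgroup.zpowers T' ∧ S ∈ Subgroup.zpowers S' := by
  obtain ⟨e, h1, h0⟩ := Nat.chineseRemainder hpm 1 0
  obtain ⟨e', h0', h1'⟩ := Nat.chineseRemainder hpm 0 1
  have A := fun j => part_pow T S p m e hT hS hc h1 h0 j
  have A' := fun j => part_pow T' S' p m e hT' hS' hc' h1 h0 j
  have B := fun j => part_pow S T m p e' hS hT hc.symm h1' h0' j
  have B' := fun j => part_pow S' T' m p e' hS' hT' hc'.symm h1' h0' j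
  rw [← hc.eq] at B
  rw [← hc'.eq] at B'
  constructor
  · rintro ⟨j, hj⟩
    simp only at hj
    refine ⟨⟨j, ?_⟩, ⟨j, ?_⟩⟩
    · have := A 1
      rw [zpow_one, zpow_one, ← hj, A'] at this
      exact this
    · have := B 1
      rw [zpow_one, zpow_one, ← hj, B'] at this
      exact this
  · rintro ⟨⟨i, rfl⟩, ⟨j, rfl⟩⟩
    simp only
    refine Subgroup.mul_mem _ ?_ ?_
    · rw [← A' i]
      exact Subgroup.pow_mem _ (Subgroup.zpow_mem _ (Subgroup.mem_zpowers _) _) _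
    · rw [← B' j]
      exact Subgroup.pow_mem _ (Subgroup.zpow_mem _ (Subgroup.mem_zpowers _) _) _

theorem not_chordal {G : Type*} [Group G] {k : ℕ} (t s : Fin (k + 2) → G) (p m N : ℕ)
    (hN : 4 ≤ N) (hpm : Nat.Coprime p m)
    (ht : ∀ i, t i ^ p = 1) (hs : ∀ i, s i ^ m = 1)
    (hta : ∀ i j, t i ∈ Subgroup.zpowers (t j) → i = j)
    (hsa : ∀ i j, s i ∈ Subgroup.zpowers (s j) → i = j)
    (a b : Fin N → Option (Fin (k + 2)))
    (hc : ∀ i, Commute (oval t (a i)) (oval s (b i)))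
    (hinj : ∀ i j, a i = a j → b i = b j → i = j)
    (hadj : ∀ i j : Fin N, (SimpleGraph.cycleGraph N).Adj i j ↔ i ≠ j ∧
      ((ole (a i) (a j) = true ∧ ole (b i) (b j) = true) ∨
        (ole (a j) (a i) = true ∧ ole (b j) (b i) = true))) :
    ¬ IsChordal (powerGraph G) := by
  intro h
  have ht' : ∀ x, oval t x ^ p = 1 := by rintro (_ | x) <;> simp [oval, ht]
  have hs' : ∀ x, oval s x ^ m = 1 := by rintro (_ | x) <;> simp [oval, hs]
  let f : Fin N → G := fun i => oval t (a i) * oval s (b i)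
  have hf : ∀ i j, f i ∈ Subgroup.zpowers (f j) ↔
      (ole (a i) (a j) = true ∧ ole (b i) (b j) = true) := by
    intro i j
    rw [tsprod_mem _ _ _ _ p m hpm (ht' _) (hs' _) (ht' _) (hs' _) (hc i) (hc j),
      oval_mem t hta, oval_mem s hsa]
  have anti : ∀ x y : Option (Fin (k + 2)), ole x y = true → ole y x = true → x = y := by
    rintro (_ | x) (_ | y) <;> simp [ole] <;> exact fun h _ => h
  have finj : Function.Injective f := by
    intro i j hij
    have h1 := (hf i j).1 (hij ▸ Subgroup.mem_zpowers _)
    have h2 := (hf j i).1 (hij ▸ Subgroup.mem_zpowers _)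
    exact hinj i j (anti _ _ h1.1 h2.1) (anti _ _ h1.2 h2.2)
  refine (h N hN).false ⟨⟨f, finj⟩, ?_⟩
  intro i j
  simp only [Function.Embedding.coeFn_mk, powerGraph, SimpleGraph.fromRel_adj, hf, hadj,
    finj.ne_iff]

theorem not_chordal8 {G : Type*} [Group G] (t s : Fin 2 → G) (p m : ℕ)
    (hpm : Nat.Coprime p m)
    (ht : ∀ i, t i ^ p = 1) (hs : ∀ i, s i ^ m = 1)
    (hta : ∀ i j, t i ∈ Subgroup.zpowers (t j) → i = j)
    (hsa : ∀ i j, s i ∈ Subgroup.zpowers (s j) → i = j)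
    (hc : ∀ i j, Commute (t i) (s j)) :
    ¬ IsChordal (powerGraph G) := by
  refine not_chordal (k := 0) t s p m 8 (by omega) hpm ht hs hta hsa
    ![some 0, some 0, none, some 1, some 1, some 1, none, some 0]
    ![none, some 0, some 0, some 0, none, some 1, some 1, some 1] ?_ (by decide) ?_
  · intro i
    fin_cases i <;> simp [oval, hc]
  · intro i j
    rw [SimpleGraph.cycleGraph_adj']
    revert i j
    decide

theorem not_chordal12 {G : Type*} [Group G] (t s : Fin 3 → G) (p m : ℕ)
    (hpm : Nat.Coprime p m)
    (ht : ∀ i, t i ^ p = 1) (hs : ∀ i, s i ^ m = 1)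
    (hta : ∀ i j, t i ∈ Subgroup.zpowers (t j) → i = j)
    (hsa : ∀ i j, s i ∈ Subgroup.zpowers (s j) → i = j)
    (hc : ∀ i j, i ≠ j → Commute (t i) (s j)) :
    ¬ IsChordal (powerGraph G) := by
  refine not_chordal (k := 1) t s p m 12 (by omega) hpm ht hs hta hsa
    ![some 0, some 0, none, some 1, some 1, some 1, none, some 2, some 2, some 2, none, some 0]
    ![none, some 2, some 2, some 2, none, some 0, some 0, some 0, none, some 1, some 1, some 1]
    ?_ (by decide) ?_
  · intro i
    fin_cases i <;> simp [oval] <;> exact hc _ _ (by decide)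
  · intro i j
    rw [SimpleGraph.cycleGraph_adj']
    revert i j
    decide
section psl
variable {F : Type*} [Field F]

theorem psl_mem [Finite F] {n : ℕ} (A B : Matrix.SpecialLinearGroup (Fin n) F)
    (h : (A : PSL n F) ∈ Subgroup.zpowers (B : PSL n F)) :
    ∃ (k : ℕ) (r : F), (A : Matrix (Fin n) (Fin n) F) = r • (B : Matrix (Fin n) (Fin n) F) ^ k := by
  have hf : IsOfFinOrder (B : PSL n F) := isOfFinOrder_of_finite _
  obtain ⟨k, hk⟩ := hf.mem_powers_iff_mem_zpowers.2 h
  simp only at hk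
  rw [← QuotientGroup.mk_pow, QuotientGroup.eq, Matrix.SpecialLinearGroup.mem_center_iff] at hk
  obtain ⟨r, -, hr⟩ := hk
  refine ⟨k, r, ?_⟩
  have h2 : (A : Matrix (Fin n) (Fin n) F) = ((B ^ k * ((B ^ k)⁻¹ * A) :
    Matrix.SpecialLinearGroup (Fin n) F) : Matrix (Fin n) (Fin n) F) := by
    rw [mul_inv_cancel_left]
  rw [Matrix.SpecialLinearGroup.coe_mul, ← hr] at h2
  rw [h2, Matrix.SpecialLinearGroup.coe_pow]
  simp [← Matrix.smul_one_eq_diagonal]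

theorem psl_pow_eq_one {n : ℕ} (A : Matrix.SpecialLinearGroup (Fin n) F) (k : ℕ) (r : F)
    (h : (A : Matrix (Fin n) (Fin n) F) ^ k = r • 1) : (A : PSL n F) ^ k = 1 := by
  rw [← QuotientGroup.mk_pow, QuotientGroup.eq_one_iff, Subgroup.mem_center_iff]
  intro B
  ext1
  rw [Matrix.SpecialLinearGroup.coe_mul, Matrix.SpecialLinearGroup.coe_mul,
    Matrix.SpecialLinearGroup.coe_pow, h]
  simp

theorem psl_comm {n : ℕ} (A B : Matrix.SpecialLinearGroup (Fin n) F)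
    (h : (A : Matrix (Fin n) (Fin n) F) * B = B * A) :
    Commute (A : PSL n F) (B : PSL n F) := by
  have : A * B = B * A := by
    apply Subtype.ext
    simpa using h
  show (A : PSL n F) * (B : PSL n F) = (B : PSL n F) * (A : PSL n F)
  rw [← QuotientGroup.mk_mul, ← QuotientGroup.mk_mul, this]

theorem mat3 (M : Matrix (Fin 3) (Fin 3) F) (hd : M.det = 1) :
    ∃ α β : F, M ^ 3 = α • M ^ 2 - β • M + (1 : F) • 1 := by
  refine ⟨M 0 0 + M 1 1 + M 2 2, M 0 0 * M 1 1 - M 0 1 * M 1 0 + (M 0 0 * M 2 2 - M 0 2 * M 2 0)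
    + (M 1 1 * M 2 2 - M 1 2 * M 2 1), ?_⟩
  rw [← hd, Matrix.det_fin_three]
  ext i j
  fin_cases i <;> fin_cases j <;>
    simp [pow_succ, Matrix.mul_apply, Fin.sum_univ_three] <;> ring

theorem eppo3 (h2 : (2 : F) = 0) (h4 : ∀ a : F, a ^ 4 = a) (M : Matrix (Fin 3) (Fin 3) F)
    (hd : M.det = 1) : ∃ (p k : ℕ) (r : F), p.Prime ∧ M ^ (p ^ k) = r • 1 := by
  obtain ⟨α, β, h⟩ := mat3 M hd
  have hneg : ∀ x : F, -x = x := fun x => by linear_combination (-x) * h2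
  have e3 : M ^ 3 = α • M ^ 2 + β • M + (1 : F) • 1 := by
    rw [h, sub_eq_add_neg, ← neg_smul, hneg]
  have step : ∀ (k : ℕ) (a b c : F), M ^ k = a • M ^ 2 + b • M + c • 1 →
      M ^ (k + 1) = (a * α + b) • M ^ 2 + (a * β + c) • M + a • 1 := by
    intro k a b c hk
    rw [pow_succ, hk]
    have : (a • M ^ 2 + b • M + c • (1 : Matrix (Fin 3) (Fin 3) F)) * M
      = a • M ^ 3 + b • M ^ 2 + c • M := by
      simp only [add_mul, smul_mul_assoc, one_mul, ← pow_succ, ← pow_two]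
    rw [this, e3]
    module
  have e4 := step 3 _ _ _ e3
  have e5 := step 4 _ _ _ e4
  have e6 := step 5 _ _ _ e5
  have e7 := step 6 _ _ _ e6
  have fin : ∀ (k : ℕ) (a b c : F), M ^ k = a • M ^ 2 + b • M + c • 1 → a = 0 → b = 0 →
      M ^ k = c • 1 := by
    rintro k a b c hk rfl rfl
    simpa using hk
  have cube : ∀ x : F, x ≠ 0 → x ^ 3 = 1 := by
    intro x hx
    apply mul_right_cancel₀ hx
    linear_combination h4 x
  by_cases ha : α = 0
  · by_cases hb : β = 0
    · refine ⟨3, 1, _, by norm_num, fin _ _ _ _ e3 ha hb⟩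
    · have hb3 := cube β hb
      refine ⟨7, 1, _, by norm_num, fin _ _ _ _ e7 ?_ ?_⟩
      · subst ha
        grind
      · subst ha
        grind
  · have ha3 := cube α ha
    by_cases hb : β = 0
    · refine ⟨7, 1, _, by norm_num, fin _ _ _ _ e7 ?_ ?_⟩
      · subst hb
        grind
      · subst hb
        grind
    · have hb3 := cube β hb
      by_cases hc : α ^ 2 = β
      · refine ⟨2, 2, _, by norm_num, fin _ _ _ _ e4 ?_ ?_⟩
        · grind
        · grind
      · have : β ^ 2 + α ^ 2 * β + α = 0 := by
          apply mul_left_cancel₀ (sub_ne_zero.2 hc)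
          grind
        refine ⟨5, 1, _, by norm_num, fin _ _ _ _ e5 ?_ ?_⟩
        · grind
        · grind
theorem psl3_not [Fintype F] (h2 : Fintype.card F ≠ 2) (h4 : Fintype.card F ≠ 4) :
    ¬ IsChordal (powerGraph (PSL 3 F)) := by
  classical
  obtain ⟨a, ha⟩ : ∃ a : Fˣ, a ^ 3 ≠ 1 := by
    by_contra! hall
    have := Monoid.exponent_dvd_of_forall_pow_eq_one hall
    rw [IsCyclic.exponent_eq_card, Nat.card_eq_fintype_card, Fintype.card_units] at this
    have h1 : 1 < Fintype.card F := Fintype.one_lt_card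
    rcases (Nat.dvd_prime Nat.prime_three).1 this with h | h <;> omega
  obtain ⟨a, c, hac, hca, -⟩ : ∃ x y : F, x ^ 2 * y = 1 ∧ x ≠ y ∧ True := by
    refine ⟨a, (a⁻¹ : Fˣ) ^ 2, ?_, ?_, trivial⟩
    · rw [← mul_pow]; simp
    · intro h
      apply ha
      ext
      rw [Units.val_pow_eq_pow_val, pow_succ]
      nth_rewrite 2 [h]
      rw [← mul_pow]; simp
  have ha0 : a ≠ 0 := by rintro rfl; simp at hac
  have hc0 : c ≠ 0 := by rintro rfl; simp at hac
  let t : Fin 3 → F → Matrix (Fin 3) (Fin 3) F := fun i x =>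
    ![!![1, x, x; 0, 1, 0; 0, 0, 1], !![1, 0, 0; x, 1, x; 0, 0, 1], !![1, 0, 0; 0, 1, 0; x, x, 1]] i
  let s : Fin 3 → F → F → Matrix (Fin 3) (Fin 3) F := fun i a c =>
    ![!![c, 0, 0; a - c, a, 0; a - c, 0, a], !![a, a - c, 0; 0, c, 0; 0, a - c, a],
      !![a, 0, a - c; 0, a, a - c; 0, 0, c]] i
  have tmul : ∀ i x y, t i x * t i y = t i (x + y) := by
    intro i x y
    fin_cases i <;> ext u v <;> fin_cases u <;> fin_cases v <;>
      simp [t, Matrix.mul_apply, Fin.sum_univ_three] <;> ring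
  have t0 : ∀ i, t i 0 = 1 := by
    intro i
    fin_cases i <;> ext u v <;> fin_cases u <;> fin_cases v <;> simp [t]
  have smul' : ∀ i x y x' y', s i x y * s i x' y' = s i (x * x') (y * y') := by
    intro i x y x' y'
    fin_cases i <;> ext u v <;> fin_cases u <;> fin_cases v <;>
      simp [s, Matrix.mul_apply, Fin.sum_univ_three] <;> ring
  have s1 : ∀ i, s i 1 1 = 1 := by
    intro i
    fin_cases i <;> ext u v <;> fin_cases u <;> fin_cases v <;> simp [s]
  have tpow : ∀ i x (k : ℕ), t i x ^ k = t i (k * x) := by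
    intro i x k
    induction k with
    | zero => simp [t0]
    | succ k ih => rw [pow_succ, ih, tmul]; congr 1; push_cast; ring
  have spow : ∀ i x y (k : ℕ), s i x y ^ k = s i (x ^ k) (y ^ k) := by
    intro i x y k
    induction k with
    | zero => simp [s1]
    | succ k ih => rw [pow_succ, ih, smul', pow_succ, pow_succ]
  have tdet : ∀ i, (t i 1).det = 1 := by
    intro i
    fin_cases i <;> simp [t, Matrix.det_fin_three]
  have sdet : ∀ i, (s i a c).det = 1 := by
    intro i
    fin_cases i <;> simp [s, Matrix.det_fin_three] <;> linear_combination hac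
  have comm : ∀ i j, i ≠ j → t i 1 * s j a c = s j a c * t i 1 := by
    intro i j hij
    fin_cases i <;> fin_cases j <;> first | exact absurd rfl hij | skip
    all_goals
      ext u v; fin_cases u <;> fin_cases v <;>
      simp [s, t, Matrix.mul_apply, Fin.sum_univ_three] <;> ring
  let T : Fin 3 → Matrix.SpecialLinearGroup (Fin 3) F := fun i => ⟨t i 1, tdet i⟩
  let S : Fin 3 → Matrix.SpecialLinearGroup (Fin 3) F := fun i => ⟨s i a c, sdet i⟩
  have hq : (Fintype.card F : F) = 0 := FiniteField.cast_card_eq_zero F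
  refine not_chordal12 (fun i => (T i : PSL 3 F)) (fun i => (S i : PSL 3 F))
    (Fintype.card F) (Fintype.card F - 1) ?_ ?_ ?_ ?_ ?_ ?_
  · have h1 : 1 < Fintype.card F := Fintype.one_lt_card
    obtain ⟨k, hk⟩ := Nat.exists_eq_add_of_lt h1
    rw [hk]
    simp
  · intro i
    refine psl_pow_eq_one _ _ 1 ?_
    show t i 1 ^ _ = _
    rw [tpow, hq, zero_mul, t0, one_smul]
  · intro i
    refine psl_pow_eq_one _ _ 1 ?_
    show s i a c ^ _ = _
    rw [spow, FiniteField.pow_card_sub_one_eq_one a ha0, FiniteField.pow_card_sub_one_eq_one c hc0,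
      s1, one_smul]
  · intro i j h
    obtain ⟨k, r, h⟩ := psl_mem _ _ h
    replace h : t i 1 = r • t j 1 ^ k := h
    rw [tpow] at h
    have e : ∀ u v, t i 1 u v = r * t j (k * 1) u v := fun u v => by rw [h]; simp
    have e01 := e 0 1
    have e10 := e 1 0
    have e20 := e 2 0
    clear e h
    fin_cases i <;> fin_cases j <;> simp [t] at e01 e10 e20 ⊢
  · intro i j h
    obtain ⟨k, r, h⟩ := psl_mem _ _ h
    replace h : s i a c = r • s j a c ^ k := h
    rw [spow] at h
    have e : ∀ u v, s i a c u v = r * s j (a ^ k) (c ^ k) u v := fun u v => by rw [h]; simp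
    have e01 := e 0 1
    have e10 := e 1 0
    have e02 := e 0 2
    clear e h
    have hca' := sub_ne_zero.2 hca
    fin_cases i <;> fin_cases j <;> simp [s, hca'] at e01 e10 e02 ⊢
  · intro i j hij
    exact psl_comm _ _ (comm i j hij)

def emb4 (k : ℕ) (M : Matrix (Fin 4) (Fin 4) F) : Matrix (Fin (4 + k)) (Fin (4 + k)) F :=
  Matrix.reindex finSumFinEquiv finSumFinEquiv (Matrix.fromBlocks M 0 0 1)

theorem emb4_det (k : ℕ) (M : Matrix (Fin 4) (Fin 4) F) : (emb4 k M).det = M.det := by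
  rw [emb4, Matrix.det_reindex_self, Matrix.det_fromBlocks_zero₂₁]; simp

theorem emb4_mul (k : ℕ) (M N : Matrix (Fin 4) (Fin 4) F) :
    emb4 k M * emb4 k N = emb4 k (M * N) := by
  simp [emb4, Matrix.submatrix_mul_equiv, Matrix.fromBlocks_multiply]

theorem emb4_one (k : ℕ) : emb4 k (1 : Matrix (Fin 4) (Fin 4) F) = 1 := by
  simp [emb4]

theorem emb4_pow (k : ℕ) (M : Matrix (Fin 4) (Fin 4) F) (j : ℕ) :
    emb4 k M ^ j = emb4 k (M ^ j) := by
  induction j with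
  | zero => simp [emb4_one]
  | succ j ih => rw [pow_succ, ih, emb4_mul, pow_succ]

theorem emb4_apply (k : ℕ) (M : Matrix (Fin 4) (Fin 4) F) (u v : Fin 4) :
    emb4 k M (Fin.castAdd k u) (Fin.castAdd k v) = M u v := by
  simp [emb4]

set_option maxHeartbeats 4000000 in
theorem psl4_aux [Fintype F] (n k : ℕ) (hn : n = 4 + k) (c : F) (p m : ℕ) (hpm : p.Coprime m)
    (hp : (p : F) = 0)
    (hm : !![0, -1, 0, 0; 1, c, 0, 0; 0, 0, 0, -1; 0, 0, 1, c] ^ m = 1)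
    (hm' : !![0, -1, 0, -1; 1, c, -1, 0; 0, 0, 0, -1; 0, 0, 1, c] ^ m = 1) :
    ¬ IsChordal (powerGraph (PSL n F)) := by
  subst hn
  let t : Fin 2 → F → Matrix (Fin 4) (Fin 4) F := fun i x =>
    ![!![1, 0, x, 0; 0, 1, 0, x; 0, 0, 1, 0; 0, 0, 0, 1],
      !![1, 0, 0, -x; 0, 1, x, c * x; 0, 0, 1, 0; 0, 0, 0, 1]] i
  let s : Fin 2 → F → F → Matrix (Fin 4) (Fin 4) F := fun i a b =>
    ![!![a, -b, 0, 0; b, a + c * b, 0, 0; 0, 0, a, -b; 0, 0, b, a + c * b],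
      !![a, -b, 0, -b; b, a + c * b, -b, 0; 0, 0, a, -b; 0, 0, b, a + c * b]] i
  have tmul : ∀ i x y, t i x * t i y = t i (x + y) := by
    intro i x y
    fin_cases i <;> ext u v <;> fin_cases u <;> fin_cases v <;>
      simp [t, Matrix.mul_apply, Fin.sum_univ_four] <;> ring
  have t0 : ∀ i, t i 0 = 1 := by
    intro i
    fin_cases i <;> ext u v <;> fin_cases u <;> fin_cases v <;> simp [t]
  have smul' : ∀ i x y, s i x y * s i 0 1 = s i (-y) (x + c * y) := by
    intro i x y
    fin_cases i <;> ext u v <;> fin_cases u <;> fin_cases v <;>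
      simp [s, Matrix.mul_apply, Fin.sum_univ_four] <;> ring
  have s1 : ∀ i, s i 1 0 = 1 := by
    intro i
    fin_cases i <;> ext u v <;> fin_cases u <;> fin_cases v <;> simp [s]
  have tpow : ∀ i x (k : ℕ), t i x ^ k = t i (k * x) := by
    intro i x k
    induction k with
    | zero => simp [t0]
    | succ k ih => rw [pow_succ, ih, tmul]; congr 1; push_cast; ring
  have spow : ∀ i (k : ℕ), ∃ x y, s i 0 1 ^ k = s i x y := by
    intro i k
    induction k with
    | zero => exact ⟨1, 0, by simp [s1]⟩
    | succ k ih =>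
      obtain ⟨x, y, ih⟩ := ih
      exact ⟨_, _, by rw [pow_succ, ih, smul']⟩
  have tdet : ∀ i, (t i 1).det = 1 := by
    intro i
    fin_cases i <;> simp [t, Matrix.det_succ_row_zero, Fin.sum_univ_succ, Fin.succAbove]
  have sdet : ∀ i, (s i 0 1).det = 1 := by
    intro i
    fin_cases i <;> simp [s, Matrix.det_succ_row_zero, Fin.sum_univ_succ, Fin.succAbove]
  have comm : ∀ i j, t i 1 * s j 0 1 = s j 0 1 * t i 1 := by
    intro i j
    fin_cases i <;> fin_cases j <;>
      (ext u v; fin_cases u <;> fin_cases v <;>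
      simp [s, t, Matrix.mul_apply, Fin.sum_univ_four] <;> ring)
  have sm : ∀ i, s i 0 1 ^ m = 1 := by
    intro i
    fin_cases i
    · simpa [s] using hm
    · simpa [s] using hm'
  let T : Fin 2 → Matrix.SpecialLinearGroup (Fin (4 + k)) F :=
    fun i => ⟨emb4 k (t i 1), by rw [emb4_det, tdet i]⟩
  let S : Fin 2 → Matrix.SpecialLinearGroup (Fin (4 + k)) F :=
    fun i => ⟨emb4 k (s i 0 1), by rw [emb4_det, sdet i]⟩
  refine not_chordal8 (fun i => (T i : PSL (4 + k) F)) (fun i => (S i : PSL (4 + k) F))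
    p m hpm ?_ ?_ ?_ ?_ ?_
  · intro i
    refine psl_pow_eq_one _ _ 1 ?_
    show emb4 k (t i 1) ^ _ = _
    rw [emb4_pow, tpow, hp, zero_mul, t0, one_smul, emb4_one]
  · intro i
    refine psl_pow_eq_one _ _ 1 ?_
    show emb4 k (s i 0 1) ^ _ = _
    rw [emb4_pow, sm, one_smul, emb4_one]
  · intro i j h
    obtain ⟨l, r, h⟩ := psl_mem _ _ h
    replace h : emb4 k (t i 1) = r • emb4 k (t j 1) ^ l := h
    rw [emb4_pow, tpow] at h
    have e : ∀ u v, t i 1 u v = r * t j (l * 1) u v := fun u v => by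
      rw [← emb4_apply k (t i 1), h, Matrix.smul_apply, emb4_apply, smul_eq_mul]
    have e02 := e 0 2
    have e03 := e 0 3
    clear e h
    fin_cases i <;> fin_cases j <;> simp [t] at e02 e03 ⊢
  · intro i j h
    obtain ⟨l, r, h⟩ := psl_mem _ _ h
    replace h : emb4 k (s i 0 1) = r • emb4 k (s j 0 1) ^ l := h
    obtain ⟨x, y, hxy⟩ := spow j l
    rw [emb4_pow, hxy] at h
    have e : ∀ u v, s i 0 1 u v = r * s j x y u v := fun u v => by
      rw [← emb4_apply k (s i 0 1), h, Matrix.smul_apply, emb4_apply, smul_eq_mul]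
    have e01 := e 0 1
    have e03 := e 0 3
    clear e h
    fin_cases i <;> fin_cases j <;> simp [s] at e01 e03 ⊢
    all_goals grind
  · intro i j
    refine psl_comm _ _ ?_
    show emb4 k (t i 1) * emb4 k (s j 0 1) = emb4 k (s j 0 1) * emb4 k (t i 1)
    rw [emb4_mul, emb4_mul, comm]

theorem psl4_not [Fintype F] (n : ℕ) (hn : 4 ≤ n) : ¬ IsChordal (powerGraph (PSL n F)) := by
  obtain ⟨k, hk⟩ := Nat.exists_eq_add_of_le hn
  obtain ⟨p, hp⟩ := CharP.exists F
  have hpp : p.Prime := CharP.char_is_prime F p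
  have hp0 : (p : F) = 0 := CharP.cast_eq_zero F p
  by_cases h3 : p = 3
  · subst h3
    refine psl4_aux n k hk 0 3 4 (by norm_num) hp0 ?_ ?_
    · refine (pow_mul _ 2 2).trans ?_
      rw [pow_two, pow_two]
      ext u v; fin_cases u <;> fin_cases v <;> simp [Matrix.mul_apply, Fin.sum_univ_four]
    · refine (pow_mul _ 2 2).trans ?_
      rw [pow_two, pow_two]
      ext u v; fin_cases u <;> fin_cases v <;> simp [Matrix.mul_apply, Fin.sum_univ_four]
  · have c3 : ∀ x : F, !![0, -1, 0, x; 1, 1, x, 0; 0, 0, 0, -1; 0, 0, 1, 1] ^ 3 = -1 := by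
      intro x
      rw [pow_succ, pow_two]
      ext u v; fin_cases u <;> fin_cases v <;> simp [Matrix.mul_apply, Fin.sum_univ_four]
    by_cases h2 : p = 2
    · subst h2
      have : (-1 : Matrix (Fin 4) (Fin 4) F) = 1 := by
        have h1 : (-1 : F) = 1 := by
          have : (2 : F) = 0 := by exact_mod_cast hp0
          linear_combination -this
        ext u v
        rw [Matrix.neg_apply, Matrix.one_apply]
        split_ifs <;> simp [h1]
      refine psl4_aux n k hk 1 2 3 (by norm_num) hp0 ?_ ?_
      · rw [c3, this]
      · rw [c3, this]
    · refine psl4_aux n k hk 1 p 6 ?_ hp0 ?_ ?_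
      · rw [show 6 = 2 * 3 from rfl]
        exact Nat.Coprime.mul_right ((Nat.coprime_primes hpp Nat.prime_two).2 h2)
          ((Nat.coprime_primes hpp Nat.prime_three).2 h3)
      · rw [show 6 = 3 * 2 from rfl, pow_mul, c3]; simp
      · rw [show 6 = 3 * 2 from rfl, pow_mul, c3]; simp
end psl

theorem stmt7 (F : Type*) [Field F] [Fintype F] (q n : ℕ) (hq : Fintype.card F = q)
    (hn : 3 ≤ n) :
    IsChordal (powerGraph (PSL n F)) ↔ n = 3 ∧ (q = 2 ∨ q = 4) := by
  subst hq
  constructor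
  · intro h
    have h3 : n = 3 := by
      by_contra h3
      exact psl4_not n (by omega) h
    subst h3
    refine ⟨rfl, ?_⟩
    by_contra! hc
    exact psl3_not hc.1 hc.2 h
  · rintro ⟨rfl, hq⟩
    have h4 : ∀ a : F, a ^ 4 = a := by
      intro a
      have := FiniteField.pow_card a
      rcases hq with hq | hq <;> rw [hq] at this
      · rw [show 4 = 2 * 2 from rfl, pow_mul, this, this]
      · exact this
    have h2 : (2 : F) = 0 := by
      have := FiniteField.cast_card_eq_zero F
      rcases hq with hq | hq <;> rw [hq] at this
      · exact_mod_cast this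
      · have h : (2 : F) * 2 = 0 := by
          push_cast at this
          linear_combination this
        simpa using h
    apply chordal_of_eppo
    intro a
    induction a using QuotientGroup.induction_on with
    | H A =>
      obtain ⟨p, k, r, hp, h⟩ := eppo3 h2 h4 (A : Matrix (Fin 3) (Fin 3) F) A.2
      exact ⟨p, k, hp, psl_pow_eq_one A _ r h⟩
end

section
/- Let F be a finite field whose cardinality q satisfies q ∉ {2, 4}. Then there exist an n ≥ 4 and a graph embedding of the cycle graph on n vertices into the power graph of the special linear group SL₃(F) such that no vertex in the image of the embedding lies in the center of SL₃(F) (i.e., the induced cycle contains no scalar matrix). In particular, the power graph of SL₃(F) is not chordal. -/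
theorem SL_eq_iff {F : Type*} [Field F] (A B : Matrix.SpecialLinearGroup (Fin 3) F) :
    A = B ↔ (A : Matrix (Fin 3) (Fin 3) F) = (B : Matrix (Fin 3) (Fin 3) F) :=
  ⟨fun h => by rw [h], fun h => Subtype.ext h⟩

/-- homology with axis a plane not containing the last basis vector -/
def hA {F : Type*} [Field F] (t s g h : F) (hts : t * t * s = 1) :
    Matrix.SpecialLinearGroup (Fin 3) F :=
  ⟨!![t, 0, 0; 0, t, 0; (s - t) * g, (s - t) * h, s], by
    rw [Matrix.det_fin_three]; simpa using hts⟩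

/-- the transvections, `1 + (u, v, w)ᵀ (v, -u, 0)` -/
def tB {F : Type*} [Field F] (u v w : F) :
    Matrix.SpecialLinearGroup (Fin 3) F :=
  ⟨!![1 + u * v, - (u * u), 0; v * v, 1 - u * v, 0; w * v, - (w * u), 1], by
    rw [Matrix.det_fin_three]; simp; ring⟩

theorem hA_pow {F : Type*} [Field F] (t s g h : F) (hts : t * t * s = 1) (n : ℕ) :
    ((hA t s g h hts ^ n : Matrix.SpecialLinearGroup (Fin 3) F) : Matrix (Fin 3) (Fin 3) F) =
      !![t ^ n, 0, 0; 0, t ^ n, 0; (s ^ n - t ^ n) * g, (s ^ n - t ^ n) * h, s ^ n] := by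
  induction n with
  | zero => ext i j; fin_cases i <;> fin_cases j <;> simp
  | succ k ih =>
    rw [pow_succ, Matrix.SpecialLinearGroup.coe_mul, ih]
    ext i j
    fin_cases i <;> fin_cases j <;> simp [hA, Matrix.mul_apply, Fin.sum_univ_three] <;> ring

theorem tB_pow {F : Type*} [Field F] (u v w : F) (n : ℕ) :
    ((tB u v w ^ n : Matrix.SpecialLinearGroup (Fin 3) F) : Matrix (Fin 3) (Fin 3) F) =
      !![1 + n * (u * v), - (n * (u * u)), 0; n * (v * v), 1 - n * (u * v), 0;
        n * (w * v), - (n * (w * u)), 1] := by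
  induction n with
  | zero => ext i j; fin_cases i <;> fin_cases j <;> simp
  | succ k ih =>
    rw [pow_succ, Matrix.SpecialLinearGroup.coe_mul, ih]
    ext i j
    fin_cases i <;> fin_cases j <;> simp [tB, Matrix.mul_apply, Fin.sum_univ_three] <;> ring

theorem commute_AB {F : Type*} [Field F] (t s g h : F) (hts : t * t * s = 1) (u v w : F)
    (hst : s - t ≠ 0) :
    Commute (hA t s g h hts) (tB u v w) ↔ ((g * u + h * v + w) * u = 0 ∧
      (g * u + h * v + w) * v = 0) := by
  rw [Commute, SemiconjBy, SL_eq_iff, Matrix.SpecialLinearGroup.coe_mul,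
    Matrix.SpecialLinearGroup.coe_mul]
  constructor
  · intro H
    have h0 := congrFun (congrFun H 2) 0
    have h1 := congrFun (congrFun H 2) 1
    simp [hA, tB, Matrix.mul_apply, Fin.sum_univ_three] at h0 h1
    constructor
    · apply mul_left_cancel₀ hst; linear_combination -h1
    · apply mul_left_cancel₀ hst; linear_combination h0
  · rintro ⟨h1, h2⟩
    ext i j
    fin_cases i <;> fin_cases j <;> simp [hA, tB, Matrix.mul_apply, Fin.sum_univ_three]
    all_goals first
      | ring1
      | linear_combination (s - t) * h2
      | linear_combination -(s - t) * h1

theorem commute_AA {F : Type*} [Field F] (t s g h g' h' : F) (hts : t * t * s = 1)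
    (hst : s - t ≠ 0) :
    Commute (hA t s g h hts) (hA t s g' h' hts) ↔ (g = g' ∧ h = h') := by
  constructor
  · intro H
    rw [Commute, SemiconjBy, SL_eq_iff, Matrix.SpecialLinearGroup.coe_mul,
      Matrix.SpecialLinearGroup.coe_mul] at H
    have h0 := congrFun (congrFun H 2) 0
    have h1 := congrFun (congrFun H 2) 1
    simp [hA, Matrix.mul_apply, Fin.sum_univ_three] at h0 h1
    constructor
    · apply mul_left_cancel₀ hst; apply mul_left_cancel₀ hst; linear_combination -h0
    · apply mul_left_cancel₀ hst; apply mul_left_cancel₀ hst; linear_combination -h1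
  · rintro ⟨rfl, rfl⟩
    exact Commute.refl _

theorem commute_BB {F : Type*} [Field F] (u v w u' v' w' : F)
    (H : Commute (tB u v w) (tB u' v' w')) : u * v' - v * u' = 0 := by
  rw [Commute, SemiconjBy, SL_eq_iff, Matrix.SpecialLinearGroup.coe_mul,
      Matrix.SpecialLinearGroup.coe_mul] at H
  have h0 := congrFun (congrFun H 0) 0
  have h1 := congrFun (congrFun H 0) 1
  simp [tB, Matrix.mul_apply, Fin.sum_univ_three] at h0 h1
  have e0 : (u * v' - v * u') * (u * v' + v * u') = 0 := by linear_combination -h0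
  have e1 : (u * v' - v * u') * (2 * (u * u')) = 0 := by linear_combination h1
  have : (u * v' - v * u') ^ 3 = 0 := by
    linear_combination (u * v' + v * u') * e0 - 2 * v * v' * e1
  exact pow_eq_zero_iff (by norm_num) |>.1 this

theorem mem_of_coprime {G : Type*} [Group G] (a b : G) (n : ℕ) (hc : Commute a b)
    (ha : a ^ n = 1) (hb : b ^ (n + 1) = 1) :
    a ∈ Subgroup.zpowers (a * b) ∧ b ∈ Subgroup.zpowers (a * b) := by
  have h1 : (a * b) ^ (n + 1) = a := by
    rw [hc.mul_pow, hb, pow_succ, ha]; simp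
  have ha' : a ∈ Subgroup.zpowers (a * b) := by
    have := Subgroup.npow_mem_zpowers (a * b) (n + 1)
    rwa [h1] at this
  refine ⟨ha', ?_⟩
  have := mul_mem (inv_mem ha') (Subgroup.mem_zpowers (a * b))
  simpa using this

/-- index set of the 12-cycle, low endpoint -/
def lo (k : Fin 12) : Fin 6 := ⟨k.val / 2, by omega⟩
/-- high endpoint -/
def hi (k : Fin 12) : Fin 6 := lo (k + 1)
/-- commuting relation on the hexagon -/
def near (i j : Fin 6) : Prop := i = j ∨ i = j + 1 ∨ j = i + 1
instance : DecidableRel near := fun i j => by unfold near; infer_instance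

theorem comb {G : Type*} [Group G] (x : Fin 6 → G)
    (hx : ∀ i j, Commute (x i) (x j) ↔ near i j)
    (hm : ∀ i, x i ∈ Subgroup.zpowers (x i * x (i + 1)) ∧
      x (i + 1) ∈ Subgroup.zpowers (x i * x (i + 1))) :
    ∃ e : SimpleGraph.cycleGraph 12 ↪g powerGraph G, ∀ i, e i ∉ Subgroup.center G := by
  classical
  let z : Fin 12 → G := fun k => if lo k = hi k then x (lo k) else x (lo k) * x (hi k)
  have hhi : ∀ k, lo k = hi k ∨ hi k = lo k + 1 := by decide
  have zmem : ∀ k, x (lo k) ∈ Subgroup.zpowers (z k) ∧ x (hi k) ∈ Subgroup.zpowers (z k) := by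
    intro k
    by_cases h : lo k = hi k
    · simp only [z, if_pos h, ← h]; simp
    · simp only [z, if_neg h]
      have := (hhi k).resolve_left h
      rw [this]; exact hm _
  have com : ∀ {u v w : G}, u ∈ Subgroup.zpowers v → Commute v w → Commute u w := by
    rintro u v w ⟨n, rfl⟩ h
    exact h.zpow_left n
  have hz : ∀ k j, Commute (z k) (x j) ↔ (near (lo k) j ∧ near (hi k) j) := by
    intro k j
    constructor
    · intro h
      exact ⟨(hx _ _).1 (com (zmem k).1 h), (hx _ _).1 (com (zmem k).2 h)⟩
    · rintro ⟨h1, h2⟩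
      by_cases h : lo k = hi k
      · simp only [z, if_pos h]; exact (hx _ _).2 h1
      · simp only [z, if_neg h]; exact ((hx _ _).2 h1).mul_left ((hx _ _).2 h2)
  have sub : ∀ k l, z k ∈ Subgroup.zpowers (z l) →
      ∀ j, (near (lo l) j ∧ near (hi l) j) → (near (lo k) j ∧ near (hi k) j) := by
    intro k l h j hj
    exact (hz k j).1 (com h ((hz l j).2 hj))
  have d1 : ∀ k l : Fin 12, (∀ j, (near (lo l) j ∧ near (hi l) j) → (near (lo k) j ∧ near (hi k) j))
      → k = l ∨ (lo k = hi k ∧ (k = l + 1 ∨ l = k + 1)) := by decide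
  have d2 : ∀ k l : Fin 12, (∀ j, (near (lo l) j ∧ near (hi l) j) → (near (lo k) j ∧ near (hi k) j))
      → (∀ j, (near (lo k) j ∧ near (hi k) j) → (near (lo l) j ∧ near (hi l) j)) → k = l := by decide
  have inj : Function.Injective z := by
    intro k l h
    apply d2 k l <;> apply sub <;> rw [h] <;> exact Subgroup.mem_zpowers _
  have d3 : ∀ k : Fin 12, (lo k = hi k ∧ lo k = lo (k + 1)) ∨
    (lo (k + 1) = hi (k + 1) ∧ lo (k + 1) = hi k) := by decide
  have step : ∀ k, z k ∈ Subgroup.zpowers (z (k + 1)) ∨ z (k + 1) ∈ Subgroup.zpowers (z k) := by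
    intro k
    rcases d3 k with ⟨h1, h2⟩ | ⟨h1, h2⟩
    · left
      have : z k = x (lo (k + 1)) := by simp only [z, if_pos h1]; rw [h2]
      rw [this]; exact (zmem (k + 1)).1
    · right
      have : z (k + 1) = x (hi k) := by simp only [z, if_pos h1]; rw [h2]
      rw [this]; exact (zmem k).2
  have d4 : ∀ k l : Fin 12, (SimpleGraph.cycleGraph 12).Adj k l ↔
      (k = l + 1 ∨ l = k + 1) := by
    intro k l
    rw [SimpleGraph.cycleGraph_adj]
    revert k l; decide
  have d5 : ∀ k : Fin 12, k ≠ k + 1 := by decide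
  refine ⟨⟨⟨z, inj⟩, ?_⟩, ?_⟩
  · intro k l
    rw [d4]
    simp only [powerGraph, SimpleGraph.fromRel_adj, Function.Embedding.coeFn_mk]
    constructor
    · rintro ⟨hne, h | h⟩
      · rcases d1 _ _ (sub _ _ h) with h | h
        · exact absurd (congrArg z h) hne
        · exact h.2
      · rcases d1 _ _ (sub _ _ h) with h | h
        · exact absurd (congrArg z h.symm) hne
        · exact h.2.symm
    · rintro (rfl | rfl)
      · exact ⟨fun h => d5 _ (inj h).symm, (step l).symm⟩
      · exact ⟨fun h => d5 _ (inj h), step k⟩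
  · intro k hk
    have d6 : ∀ k, ∃ j, ¬ (near (lo k) j ∧ near (hi k) j) := by decide
    obtain ⟨j, hj⟩ := d6 k
    exact hj ((hz k j).1 ((Subgroup.mem_center_iff.1 hk (x j)).symm))

theorem exists_t (F : Type*) [Field F] [Fintype F]
    (hq : Fintype.card F ≠ 2 ∧ Fintype.card F ≠ 4) : ∃ t : F, t ≠ 0 ∧ t ^ 3 ≠ 1 := by
  classical
  by_contra! H
  obtain ⟨g, hg⟩ := IsCyclic.exists_generator (α := Fˣ)
  have h1 := orderOf_eq_card_of_forall_mem_zpowers hg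
  have h2 : g ^ 3 = 1 := by
    ext; push_cast; exact H _ g.ne_zero
  have h3 := orderOf_dvd_of_pow_eq_one h2
  rw [h1, Nat.card_eq_fintype_card, Fintype.card_units, Nat.dvd_prime Nat.prime_three] at h3
  omega

theorem stmt8 (F : Type*) [Field F] [Fintype F]
    (hq : Fintype.card F ≠ 2 ∧ Fintype.card F ≠ 4) :
    (∃ (n : ℕ) (_ : 4 ≤ n)
        (e : SimpleGraph.cycleGraph n ↪g powerGraph (Matrix.SpecialLinearGroup (Fin 3) F)),
        ∀ i, e i ∉ Subgroup.center (Matrix.SpecialLinearGroup (Fin 3) F)) ∧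
      ¬ IsChordal (powerGraph (Matrix.SpecialLinearGroup (Fin 3) F)) := by
  obtain ⟨t, ht0, ht3⟩ := exists_t F hq
  obtain ⟨s, hts⟩ : ∃ s : F, t * t * s = 1 := ⟨(t * t)⁻¹, mul_inv_cancel₀ (mul_ne_zero ht0 ht0)⟩
  have hst : s - t ≠ 0 := by
    intro h
    apply ht3
    rw [sub_eq_zero] at h; subst h; linear_combination hts
  have hs0 : s ≠ 0 := by rintro rfl; simp at hts
  obtain ⟨n, hn⟩ : ∃ n, Fintype.card F = n + 1 := ⟨Fintype.card F - 1, by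
    have := Fintype.card_pos (α := F); omega⟩
  have pA : ∀ g h, hA t s g h hts ^ n = 1 := by
    intro g h
    have e1 : t ^ n = 1 := by
      have := FiniteField.pow_card_sub_one_eq_one t ht0; rwa [hn] at this
    have e2 : s ^ n = 1 := by
      have := FiniteField.pow_card_sub_one_eq_one s hs0; rwa [hn] at this
    apply Subtype.ext
    rw [hA_pow, e1, e2]
    ext i j; fin_cases i <;> fin_cases j <;> simp
  have pB : ∀ u v w : F, tB u v w ^ (n + 1) = 1 := by
    intro u v w
    have e1 : ((n + 1 : ℕ) : F) = 0 := by rw [← hn]; exact FiniteField.cast_card_eq_zero F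
    apply Subtype.ext
    rw [tB_pow, e1]
    ext i j; fin_cases i <;> fin_cases j <;> simp
  let x : Fin 6 → Matrix.SpecialLinearGroup (Fin 3) F :=
    ![hA t s 0 0 hts, tB 0 1 0, hA t s (-1) 0 hts, tB 1 1 1, hA t s 0 (-1) hts, tB 1 0 0]
  have hx : ∀ i j, Commute (x i) (x j) ↔ near i j := by
    have BA : ∀ u v w g h : F, Commute (tB u v w) (hA t s g h hts) ↔
        ((g * u + h * v + w) * u = 0 ∧ (g * u + h * v + w) * v = 0) :=
      fun u v w g h => Commute.symm_iff.trans (commute_AB _ _ _ _ hts _ _ _ hst)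
    have BB : ∀ u v w u' v' w' : F, (u * v' - v * u') ≠ 0 → ¬ Commute (tB u v w) (tB u' v' w') :=
      fun u v w u' v' w' h H => h (commute_BB _ _ _ _ _ _ H)
    intro i j
    fin_cases i <;> fin_cases j <;>
      simp [x, near, commute_AA _ _ _ _ _ _ hts hst, commute_AB _ _ _ _ hts _ _ _ hst,
        BA, Commute.refl]
    all_goals (apply BB; simp)
  have hm : ∀ i, x i ∈ Subgroup.zpowers (x i * x (i + 1)) ∧
      x (i + 1) ∈ Subgroup.zpowers (x i * x (i + 1)) := by
    intro i
    have hc : Commute (x i) (x (i + 1)) := (hx _ _).2 (by revert i; decide)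
    have key : (x i ^ n = 1 ∧ x (i + 1) ^ (n + 1) = 1) ∨
        (x (i + 1) ^ n = 1 ∧ x i ^ (n + 1) = 1) := by
      fin_cases i <;> simp [x, pA, pB]
    rcases key with ⟨h1, h2⟩ | ⟨h1, h2⟩
    · exact mem_of_coprime _ _ n hc h1 h2
    · rw [hc.eq]; exact (mem_of_coprime _ _ n hc.symm h1 h2).symm
  obtain ⟨e, he⟩ := comb x hx hm
  exact ⟨⟨12, by norm_num, e, he⟩, fun h => (h 12 (by norm_num)).false e⟩
end

section
/- Let G be a finite group. If there exists an element g ∈ G and distinct primes p, q with p²q² dividing the order of g, or there exists an element g ∈ G and pairwise distinct primes p, q, r with pqr dividing the order of g, then the power graph of G is not chordal. -/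
theorem stmt9_dvd {p q r : ℕ} (hp : p.Prime) (hq : q.Prime) (hr : r.Prime)
    (hpq : p ≠ q) (hpr : p ≠ r) (hqr : q ≠ r) (a b c a' b' c' : ℕ) :
    p ^ a * q ^ b * r ^ c ∣ p ^ a' * q ^ b' * r ^ c' ↔ a ≤ a' ∧ b ≤ b' ∧ c ≤ c' := by
  have c1 := (Nat.coprime_primes hp hq).2 hpq
  have c2 := (Nat.coprime_primes hp hr).2 hpr
  have c3 := (Nat.coprime_primes hq hr).2 hqr
  constructor
  · intro h
    refine ⟨?_, ?_, ?_⟩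
    · have h1 : p ^ a ∣ p ^ a' * q ^ b' * r ^ c' :=
        dvd_trans (Dvd.intro _ (by ring : p ^ a * (q ^ b * r ^ c) = _)) h
      have h2 := (Nat.Coprime.pow a c' c2).dvd_of_dvd_mul_right h1
      have h3 := (Nat.Coprime.pow a b' c1).dvd_of_dvd_mul_right h2
      exact (Nat.pow_dvd_pow_iff_le_right hp.one_lt).1 h3
    · have h1 : q ^ b ∣ p ^ a' * q ^ b' * r ^ c' :=
        dvd_trans (Dvd.intro _ (by ring : q ^ b * (p ^ a * r ^ c) = _)) h
      have h2 := (Nat.Coprime.pow b c' c3).dvd_of_dvd_mul_right h1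
      have h3 := (Nat.Coprime.pow b a' c1.symm).dvd_of_dvd_mul_left h2
      exact (Nat.pow_dvd_pow_iff_le_right hq.one_lt).1 h3
    · have h1 : r ^ c ∣ p ^ a' * q ^ b' * r ^ c' :=
        dvd_trans (Dvd.intro_left _ rfl) h
      have h2 := (Nat.Coprime.mul_right (Nat.Coprime.pow c a' c2.symm)
        (Nat.Coprime.pow c b' c3.symm)).dvd_of_dvd_mul_left h1
      exact (Nat.pow_dvd_pow_iff_le_right hr.one_lt).1 h2
  · rintro ⟨h1, h2, h3⟩
    exact mul_dvd_mul (mul_dvd_mul (pow_dvd_pow _ h1) (pow_dvd_pow _ h2)) (pow_dvd_pow _ h3)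

theorem stmt9_mem {G : Type*} [Group G] [Fintype G] (g : G) {d e : ℕ}
    (hd : d ∣ orderOf g) (he : e ∣ orderOf g) :
    g ^ (orderOf g / d) ∈ Subgroup.zpowers (g ^ (orderOf g / e)) ↔ d ∣ e := by
  have hN := orderOf_pos g
  constructor
  · intro h
    have := orderOf_dvd_of_mem_zpowers h
    rwa [orderOf_pow_orderOf_div hN.ne' hd, orderOf_pow_orderOf_div hN.ne' he] at this
  · rintro ⟨k, rfl⟩
    obtain ⟨m, hm⟩ := he
    have hd0 : 0 < d := Nat.pos_of_dvd_of_pos hd hN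
    have hk0 : 0 < d * k := Nat.pos_of_ne_zero (by rintro h0; rw [h0] at hm; omega)
    have e1 : orderOf g / (d * k) = m := by rw [hm]; exact Nat.mul_div_cancel_left _ hk0
    have e2 : orderOf g / d = m * k := by
      rw [hm, mul_assoc, Nat.mul_div_cancel_left _ hd0, mul_comm]
    rw [e1, e2, pow_mul]
    exact Subgroup.npow_mem_zpowers _ _

theorem stmt9_key {G : Type*} [Group G] [Fintype G] (g : G) {p q r : ℕ}
    (hp : p.Prime) (hq : q.Prime) (hr : r.Prime)
    (hpq : p ≠ q) (hpr : p ≠ r) (hqr : q ≠ r) (n : ℕ) (hn : 4 ≤ n) (a b c : Fin n → ℕ)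
    (hdvd : ∀ i, p ^ a i * q ^ b i * r ^ c i ∣ orderOf g)
    (hadj : ∀ i j, (SimpleGraph.cycleGraph n).Adj i j ↔ i ≠ j ∧
      ((a i ≤ a j ∧ b i ≤ b j ∧ c i ≤ c j) ∨ (a j ≤ a i ∧ b j ≤ b i ∧ c j ≤ c i)))
    (hinj : ∀ i j, a i ≤ a j ∧ b i ≤ b j ∧ c i ≤ c j → a j ≤ a i ∧ b j ≤ b i ∧ c j ≤ c i → i = j) :
    ¬ IsChordal (powerGraph G) := by
  intro H
  have key : ∀ i j, g ^ (orderOf g / (p ^ a i * q ^ b i * r ^ c i)) ∈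
      Subgroup.zpowers (g ^ (orderOf g / (p ^ a j * q ^ b j * r ^ c j))) ↔
      (a i ≤ a j ∧ b i ≤ b j ∧ c i ≤ c j) := fun i j => by
    rw [stmt9_mem g (hdvd i) (hdvd j), stmt9_dvd hp hq hr hpq hpr hqr]
  have inj : Function.Injective
      (fun i => g ^ (orderOf g / (p ^ a i * q ^ b i * r ^ c i))) := by
    intro i j h
    simp only at h
    refine hinj i j ((key i j).1 ?_) ((key j i).1 ?_)
    · rw [h]; exact Subgroup.mem_zpowers _
    · rw [h]; exact Subgroup.mem_zpowers _
  refine (H n hn).false ⟨⟨_, inj⟩, ?_⟩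
  intro i j
  rw [hadj, ← key i j, ← key j i]
  simp only [powerGraph, SimpleGraph.fromRel_adj, Function.Embedding.coeFn_mk]
  rw [inj.ne_iff (x := i) (y := j)]

theorem stmt9 (G : Type*) [Group G] [Fintype G]
    (h : (∃ (g : G) (p q : ℕ), p.Prime ∧ q.Prime ∧ p ≠ q ∧ p ^ 2 * q ^ 2 ∣ orderOf g) ∨
      (∃ (g : G) (p q r : ℕ), p.Prime ∧ q.Prime ∧ r.Prime ∧
        p ≠ q ∧ p ≠ r ∧ q ≠ r ∧ p * q * r ∣ orderOf g)) :
    ¬ IsChordal (powerGraph G) := by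
  rcases h with ⟨g, p, q, hp, hq, hpq, h⟩ | ⟨g, p, q, r, hp, hq, hr, hpq, hpr, hqr, h⟩
  · obtain ⟨r, hr1, hr⟩ := Nat.exists_infinite_primes (p + q + 1)
    have hpr : p ≠ r := by omega
    have hqr : q ≠ r := by omega
    refine stmt9_key g hp hq hr hpq hpr hqr 4 le_rfl
      ![1, 2, 0, 1] ![0, 1, 1, 2] ![0, 0, 0, 0] ?_ ?_ ?_
    · intro i
      have h' : p ^ 2 * q ^ 2 * r ^ 0 ∣ orderOf g := by simpa using h
      refine dvd_trans ((stmt9_dvd hp hq hr hpq hpr hqr _ _ _ _ _ _).2 ?_) h'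
      revert i; decide
    · simp only [SimpleGraph.cycleGraph_adj]; decide
    · decide
  · refine stmt9_key g hp hq hr hpq hpr hqr 6 (by norm_num)
      ![1, 1, 0, 0, 0, 1] ![0, 1, 1, 1, 0, 0] ![0, 0, 0, 1, 1, 1] ?_ ?_ ?_
    · intro i
      have h' : p ^ 1 * q ^ 1 * r ^ 1 ∣ orderOf g := by simpa using h
      refine dvd_trans ((stmt9_dvd hp hq hr hpq hpr hqr _ _ _ _ _ _).2 ?_) h'
      revert i; decide
    · simp only [SimpleGraph.cycleGraph_adj]; decide
    · decide
end

section
/- Let G be a finite group in which every element has prime power order (for every g ∈ G there exist a prime p and a natural number k with the order of g equal to p^k). Then the power graph of G is chordal. -/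
theorem pg_aux {G : Type*} [Group G] [Fintype G] (x y z : G)
    (hx : x ∈ Subgroup.zpowers z) (hy : y ∈ Subgroup.zpowers z)
    (hd : orderOf x ∣ orderOf y) : x ∈ Subgroup.zpowers y := by
  classical
  have hc : ((Finset.univ : Finset (Subgroup.zpowers z)).filter
      (fun a => a ^ orderOf y = 1)).card ≤ orderOf y :=
    IsCyclic.card_pow_eq_one_le (orderOf_pos y)
  set S := (Finset.univ : Finset (Subgroup.zpowers z)).filter
      (fun a => a ^ orderOf y = 1) with hS
  set T : Finset (Subgroup.zpowers z) := (Finset.univ : Finset (Subgroup.zpowers z)).filter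
      (fun a => a ∈ Subgroup.zpowers (⟨y, hy⟩ : Subgroup.zpowers z)) with hT
  have hTc : T.card = orderOf y := by
    have h1 : orderOf (⟨y, hy⟩ : Subgroup.zpowers z) = orderOf y := Subgroup.orderOf_mk y hy
    rw [← h1, ← Nat.card_zpowers, hT, Nat.card_eq_fintype_card, Fintype.card_subtype]
  have hTS : T ⊆ S := by
    intro a ha
    simp only [hT, hS, Finset.mem_filter, Finset.mem_univ, true_and] at ha ⊢
    have := orderOf_dvd_of_mem_zpowers ha
    rw [Subgroup.orderOf_mk y hy] at this
    exact orderOf_dvd_iff_pow_eq_one.mp this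
  have hE : T = S := Finset.eq_of_subset_of_card_le hTS (by omega)
  have hxS : (⟨x, hx⟩ : Subgroup.zpowers z) ∈ S := by
    simp only [hS, Finset.mem_filter, Finset.mem_univ, true_and]
    apply orderOf_dvd_iff_pow_eq_one.mp
    rwa [Subgroup.orderOf_mk]
  rw [← hE] at hxS
  simp only [hT, Finset.mem_filter, Finset.mem_univ, true_and] at hxS
  obtain ⟨k, hk⟩ := Subgroup.mem_zpowers_iff.mp hxS
  exact Subgroup.mem_zpowers_iff.mpr ⟨k, by simpa using congrArg Subtype.val hk⟩

theorem pg_comparable {G : Type*} [Group G] [Fintype G]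
    (heppo : ∀ g : G, ∃ (p k : ℕ), p.Prime ∧ orderOf g = p ^ k) (x y z : G)
    (hx : x ∈ Subgroup.zpowers z) (hy : y ∈ Subgroup.zpowers z) :
    x ∈ Subgroup.zpowers y ∨ y ∈ Subgroup.zpowers x := by
  obtain ⟨p, k, hp, hk⟩ := heppo z
  have h1 := orderOf_dvd_of_mem_zpowers hx
  have h2 := orderOf_dvd_of_mem_zpowers hy
  rw [hk] at h1 h2
  obtain ⟨a, -, ha⟩ := (Nat.dvd_prime_pow hp).mp h1
  obtain ⟨b, -, hb⟩ := (Nat.dvd_prime_pow hp).mp h2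
  rcases le_total a b with h | h
  · left; apply pg_aux x y z hx hy; rw [ha, hb]; exact pow_dvd_pow p h
  · right; apply pg_aux y x z hy hx; rw [ha, hb]; exact pow_dvd_pow p h

theorem pg_down {G : Type*} [Group G] [Fintype G] (u v : G)
    (h : (powerGraph G).Adj v u) (hle : orderOf u ≤ orderOf v) : u ∈ Subgroup.zpowers v := by
  rw [powerGraph, SimpleGraph.fromRel_adj] at h
  rcases h.2 with h | h
  · apply pg_aux u v u (Subgroup.mem_zpowers u) h
    have := orderOf_dvd_of_mem_zpowers h
    rw [le_antisymm (Nat.le_of_dvd (orderOf_pos u) this) hle]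
  · exact h

theorem stmt10 (G : Type*) [Group G] [Fintype G]
    (heppo : ∀ g : G, ∃ (p k : ℕ), p.Prime ∧ orderOf g = p ^ k) :
    IsChordal (powerGraph G) := by
  intro n hn
  refine ⟨fun f => ?_⟩
  obtain ⟨m, rfl⟩ : ∃ m, n = m + 4 := ⟨n - 4, by omega⟩
  obtain ⟨v, hv⟩ := Finite.exists_max (fun i : Fin (m + 4) => orderOf (f i))
  have key : ∀ u w, (SimpleGraph.cycleGraph (m+4)).Adj v u →
      (SimpleGraph.cycleGraph (m+4)).Adj v w → u ≠ w →
      (SimpleGraph.cycleGraph (m+4)).Adj u w := by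
    intro u w hu hw hne
    rw [← f.map_adj_iff] at hu hw ⊢
    have h1 := pg_down _ _ hu (hv u)
    have h2 := pg_down _ _ hw (hv w)
    refine (SimpleGraph.fromRel_adj _ _ _).mpr ?_
    exact ⟨fun h => hne (f.injective h), pg_comparable heppo _ _ _ h1 h2⟩
  have h11 : (1 : Fin (m+4)) + 1 ≠ 0 := by
    intro h; have := congrArg Fin.val h; simp [Fin.val_add] at this
    rw [Nat.mod_eq_of_lt (by omega)] at this; omega
  have h3 : (1 : Fin (m+4)) + 1 ≠ 1 := by simp
  have h111 : (1 : Fin (m+4)) + 1 + 1 ≠ 0 := by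
    intro h; have := congrArg Fin.val h; simp [Fin.val_add] at this
    rw [Nat.mod_eq_of_lt (by omega)] at this; omega
  have := key (v + 1) (v - 1)
    (by rw [SimpleGraph.cycleGraph_adj]; right; abel)
    (by rw [SimpleGraph.cycleGraph_adj]; left; abel)
    (by
      intro h
      apply h11
      have : (1 : Fin (m+4)) + 1 = (v + 1) - (v - 1) := by abel
      rw [this, h, sub_self])
  rw [SimpleGraph.cycleGraph_adj] at this
  rcases this with h | h
  · apply h3
    have h' : (1 : Fin (m+4)) + 1 = (v + 1) - (v - 1) := by abel
    rw [h', h]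
  · apply h111
    have h' : (1 : Fin (m+4)) + 1 + 1 = 1 - (v - 1 - (v + 1)) := by abel
    rw [h', h, sub_self]
end

section
/- Let G be a finite group containing no element whose order is divisible by p²q² for any two distinct primes p and q. Suppose that for every x ∈ G of prime order p, the centralizer C_G(x) is either a p-group, or there exist subgroups Z and P of C_G(x) such that Z is a normal cyclic q-group for some prime q ≠ p, P is a p-group, Z ∩ P is trivial, and Z together with P generate C_G(x) (i.e., C_G(x) is an internal semidirect product C_{q^n} ⋊ P). Then the power graph of G is chordal. -/
open Subgroup in
theorem cyc_mem {G : Type*} [Group G] [Finite G] (w u v : G) (hu : u ∈ zpowers w) (hv : v ∈ zpowers w)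
    (h : orderOf u ∣ orderOf v) : u ∈ zpowers v := by
  obtain ⟨a, rfl⟩ := (mem_powers_iff_mem_zpowers (x := w)).2 hu
  obtain ⟨b, rfl⟩ := (mem_powers_iff_mem_zpowers (x := w)).2 hv
  dsimp only at h ⊢
  have hN : 0 < orderOf w := orderOf_pos w
  have hg : 0 < Nat.gcd (orderOf w) b := Nat.gcd_pos_of_pos_left _ hN
  have h1 : w ^ Nat.gcd (orderOf w) b ∈ zpowers (w ^ b) := by
    rw [mem_zpowers_iff]
    refine ⟨Nat.gcdB (orderOf w) b, ?_⟩
    rw [← zpow_natCast w (Nat.gcd _ _), Nat.gcd_eq_gcd_ab, zpow_add, zpow_mul, zpow_mul]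
    simp
  have h2 : Nat.gcd (orderOf w) b ∣ a := by
    have h3 : (w ^ a) ^ (orderOf (w ^ b)) = 1 := orderOf_dvd_iff_pow_eq_one.1 h
    rw [← pow_mul, ← orderOf_dvd_iff_pow_eq_one, orderOf_pow] at h3
    obtain ⟨m, hm⟩ := Nat.gcd_dvd_left (orderOf w) b
    set g := Nat.gcd (orderOf w) b
    rw [hm, Nat.mul_div_cancel_left _ hg] at h3
    have hm0 : 0 < m := by
      rcases Nat.eq_zero_or_pos m with h0 | h0
      · rw [h0] at hm; omega
      · exact h0
    exact Nat.dvd_of_mul_dvd_mul_right hm0 h3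
  obtain ⟨k, rfl⟩ := h2
  rw [pow_mul]
  exact pow_mem h1 k

theorem cyc_mem' {G : Type*} [Group G] [Finite G] (Z : Subgroup G) (hZ : IsCyclic Z) (u v : G) (hu : u ∈ Z) (hv : v ∈ Z)
    (h : orderOf u ∣ orderOf v) : u ∈ Subgroup.zpowers v := by
  obtain ⟨w, hw⟩ := Subgroup.isCyclic_iff_exists_zpowers_eq_top Z |>.1 hZ
  subst hw
  exact cyc_mem w u v hu hv h

/-- coprime powers: membership of `g` from membership of two coprime powers -/
theorem mem_of_coprime_s11 {G : Type*} [Group G] (H : Subgroup G) (g : G) (m n : ℕ)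
    (hmn : Nat.Coprime m n) (h1 : g ^ m ∈ H) (h2 : g ^ n ∈ H) : g ∈ H := by
  have h : g ^ ((Nat.gcd m n : ℕ) : ℤ) ∈ H := by
    rw [Nat.gcd_eq_gcd_ab, zpow_add, zpow_mul, zpow_mul, zpow_natCast, zpow_natCast]
    exact H.mul_mem (H.zpow_mem h1 _) (H.zpow_mem h2 _)
  rw [hmn] at h
  simpa using h

theorem struct {G : Type*} [Group G] [Finite G] (C Z P : Subgroup G) (p : ℕ)
    (hZC : Z ≤ C) (hPC : P ≤ C)
    (hP : ∀ y ∈ P, ∃ k : ℕ, orderOf y = p ^ k)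
    (hn : ∀ g ∈ C, ∀ z ∈ Z, g * z * g⁻¹ ∈ Z) (hs : Z ⊔ P = C) :
    ∀ g ∈ C, ∃ k : ℕ, g ^ (p ^ k) ∈ Z := by
  let K : Subgroup G :=
    { carrier := {g | g ∈ C ∧ ∃ u ∈ P, g * u⁻¹ ∈ Z}
      one_mem' := ⟨C.one_mem, 1, P.one_mem, by simp⟩
      mul_mem' := by
        rintro g h ⟨hg, u, hu, hgu⟩ ⟨hh, v, hv, hhv⟩
        refine ⟨C.mul_mem hg hh, u * v, P.mul_mem hu hv, ?_⟩
        have := Z.mul_mem (hn g hg _ hhv) hgu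
        convert this using 1
        group
      inv_mem' := by
        rintro g ⟨hg, u, hu, hgu⟩
        refine ⟨C.inv_mem hg, u⁻¹, P.inv_mem hu, ?_⟩
        have := Z.inv_mem (hn g⁻¹ (C.inv_mem hg) _ hgu)
        convert this using 1
        group }
  have hK : C ≤ K := by
    rw [← hs, sup_le_iff]
    constructor
    · intro z hz
      exact ⟨hZC hz, 1, P.one_mem, by simpa using hz⟩
    · intro u hu
      exact ⟨hPC hu, u, hu, by simp⟩
  intro g hg
  obtain ⟨_, u, hu, hgu⟩ := hK hg
  obtain ⟨k, hk⟩ := hP u hu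
  refine ⟨k, ?_⟩
  have key : ∀ n : ℕ, g ^ n * (u ^ n)⁻¹ ∈ Z := by
    intro n
    induction n with
    | zero => simp
    | succ n ih =>
      have := Z.mul_mem (hn g hg _ ih) hgu
      convert this using 1
      rw [pow_succ' g, pow_succ u]
      group
  have := key (p ^ k)
  rw [← hk, pow_orderOf_eq_one] at this
  rw [← hk]
  simpa using this

/-- a `q'`-element normalizing a cyclic `q`-group and centralizing the order `q` part -/
theorem commute_of {G : Type*} [Group G] [Finite G] (q l : ℕ) (g z y : G)
    (hl : 1 ≤ l) (hz : orderOf z = q ^ l) (hg : Nat.Coprime q (orderOf g))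
    (hgz : g * z * g⁻¹ ∈ Subgroup.zpowers z) (hy : y ∈ Subgroup.zpowers z) (hyo : orderOf y = q)
    (hgy : g * y * g⁻¹ = y) : Commute g z := by
  obtain ⟨r, hr⟩ := Subgroup.mem_zpowers_iff.1 hgz
  obtain ⟨t, rfl⟩ := Subgroup.mem_zpowers_iff.1 hy
  have h1 : (q : ℤ) ∣ r - 1 := by
    have h2 : (z ^ t) ^ (r - 1) = 1 := by
      rw [zpow_sub, zpow_one, mul_inv_eq_one, ← zpow_mul, mul_comm, zpow_mul, hr, conj_zpow, hgy]
    rwa [← orderOf_dvd_iff_zpow_eq_one, hyo] at h2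
  have h3 := dvd_sub_pow_of_dvd_sub h1 (l - 1)
  rw [Nat.sub_add_cancel hl, one_pow] at h3
  have key : ∀ n : ℕ, g ^ n * z * (g ^ n)⁻¹ = z ^ (r ^ n) := by
    intro n
    induction n with
    | zero => simp
    | succ n ih =>
      rw [pow_succ' r, zpow_mul, hr, conj_zpow, ← ih, pow_succ' g]
      group
  have h4 := key (q ^ (l - 1))
  have h5 : z ^ (r ^ (q ^ (l - 1))) = z := by
    have : z ^ (r ^ (q ^ (l - 1)) - 1) = 1 := by
      rw [← orderOf_dvd_iff_zpow_eq_one, hz]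
      exact_mod_cast h3
    rwa [zpow_sub, zpow_one, mul_inv_eq_one] at this
  rw [h5] at h4
  have h6 : g ∈ Subgroup.centralizer {z} := by
    apply mem_of_coprime_s11 _ g (q ^ (l - 1)) (orderOf g) (Nat.Coprime.pow_left _ hg)
    · rw [Subgroup.mem_centralizer_singleton_iff]
      exact mul_inv_eq_iff_eq_mul.1 h4
    · rw [pow_orderOf_eq_one]; exact Subgroup.one_mem _
  rw [Subgroup.mem_centralizer_singleton_iff] at h6
  exact h6

def HC (G : Type*) [Group G] : Prop := 
    ∀ (x : G) (p : ℕ), p.Prime → orderOf x = p →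
      (∀ y ∈ Subgroup.centralizer {x}, ∃ k : ℕ, orderOf y = p ^ k) ∨
      (∃ (q : ℕ) (Z P : Subgroup G), q.Prime ∧ q ≠ p ∧
        Z ≤ Subgroup.centralizer {x} ∧ P ≤ Subgroup.centralizer {x} ∧
        IsCyclic Z ∧ (∀ z ∈ Z, ∃ k : ℕ, orderOf z = q ^ k) ∧
        (∀ y ∈ P, ∃ k : ℕ, orderOf y = p ^ k) ∧
        (∀ g ∈ Subgroup.centralizer {x}, ∀ z ∈ Z, g * z * g⁻¹ ∈ Z) ∧
        Z ⊓ P = ⊥ ∧ Z ⊔ P = Subgroup.centralizer {x})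

/-- consequence of the centralizer condition -/
theorem HC.use {G : Type*} [Group G] [Finite G] (hc : HC G) (x a : G) (p q : ℕ) (hp : p.Prime)
    (hq : q.Prime) (hpq : p ≠ q) (hx : orderOf x = p) (hxa : x ∈ Subgroup.zpowers a)
    (hqa : q ∣ orderOf a) : ∃ Z : Subgroup G, IsCyclic Z ∧
      (∀ g, x ∈ Subgroup.zpowers g → ∀ z ∈ Z, g * z * g⁻¹ ∈ Z) ∧
      (∀ g, x ∈ Subgroup.zpowers g → ∃ k m : ℕ, orderOf g = p ^ k * q ^ m) ∧
      (∀ g h, x ∈ Subgroup.zpowers g → h ∈ Subgroup.zpowers g → 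
        Nat.Coprime p (orderOf h) → h ∈ Z) := by
  have hcen : ∀ g, x ∈ Subgroup.zpowers g → g ∈ Subgroup.centralizer {x} := by
    intro g hg
    rw [Subgroup.mem_centralizer_singleton_iff]
    obtain ⟨t, rfl⟩ := Subgroup.mem_zpowers_iff.1 hg
    exact (Commute.refl g).zpow_right t
  rcases hc x p hp hx with h | ⟨r, Z, P, hr, hrp, hZC, hPC, hcy, hZ, hP, hn, -, hs⟩
  · obtain ⟨k, hk⟩ := h a (hcen a hxa)
    rw [hk] at hqa
    exact absurd ((Nat.prime_dvd_prime_iff_eq hq hp).1 (hq.dvd_of_dvd_pow hqa)).symm hpq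
  have hst := struct _ Z P p hZC hPC hP hn hs
  have hord : ∀ g, x ∈ Subgroup.zpowers g → ∃ k m : ℕ, orderOf g = p ^ k * r ^ m := by
    intro g hg
    obtain ⟨k, hk⟩ := hst g (hcen g hg)
    obtain ⟨m, hm⟩ := hZ _ hk
    have h1 : orderOf g ∣ p ^ k * r ^ m := by
      rw [orderOf_dvd_iff_pow_eq_one, pow_mul, ← hm, pow_orderOf_eq_one]
    obtain ⟨u, v, hu, hv, huv⟩ := (Nat.dvd_mul.1 h1)
    obtain ⟨k', _, rfl⟩ := (Nat.dvd_prime_pow hp).1 hu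
    obtain ⟨m', _, rfl⟩ := (Nat.dvd_prime_pow hr).1 hv
    exact ⟨k', m', huv.symm⟩
  have hqr : q = r := by
    obtain ⟨k, m, hkm⟩ := hord a hxa
    rw [hkm, hq.dvd_mul] at hqa
    rcases hqa with h | h
    · exact absurd ((Nat.prime_dvd_prime_iff_eq hq hp).1 (hq.dvd_of_dvd_pow h)).symm hpq
    · exact (Nat.prime_dvd_prime_iff_eq hq hr).1 (hq.dvd_of_dvd_pow h)
  subst hqr
  refine ⟨Z, hcy, fun g hg => hn g (hcen g hg), hord, ?_⟩
  intro g h hg hh hco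
  obtain ⟨t, rfl⟩ := Subgroup.mem_zpowers_iff.1 hh
  obtain ⟨k, hk⟩ := hst _ (Subgroup.zpow_mem _ (hcen g hg) t)
  apply mem_of_coprime_s11 Z _ _ _ (Nat.Coprime.pow_left k hco) hk
  rw [pow_orderOf_eq_one]; exact Z.one_mem

theorem core {G : Type*} [Group G] [Finite G] (hc : HC G)
    (hord : ∀ (g : G) (p q : ℕ), p.Prime → q.Prime → p ≠ q → ¬ p ^ 2 * q ^ 2 ∣ orderOf g)
    (p q i s : ℕ) (hp : p.Prime) (hq : q.Prime) (hpq : p ≠ q) (a b c : G)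
    (ha : orderOf a = p ^ i * q) (hb : orderOf b = p ^ s) (hs : s ≠ 0)
    (hba : b ∈ Subgroup.zpowers a) (hbc : b ∈ Subgroup.zpowers c)
    (hcp : ¬ ∃ k, orderOf c = p ^ k)
    (hac : a ∉ Subgroup.zpowers c) (hca : c ∉ Subgroup.zpowers a) : False := by
  have cop : Nat.Coprime p q := (Nat.coprime_primes hp hq).2 hpq
  have copn : ∀ m n, Nat.Coprime (p ^ m) (q ^ n) := fun m n => Nat.Coprime.pow _ _ cop
  -- element of order p
  have hxo : orderOf (b ^ p ^ (s - 1)) = p := by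
    rw [orderOf_pow_of_dvd (pow_ne_zero _ hp.ne_zero) (hb ▸ pow_dvd_pow p (Nat.sub_le _ _)), hb,
      Nat.pow_div (Nat.sub_le _ _) hp.pos]
    have : s - (s - 1) = 1 := by omega
    rw [this, pow_one]
  set x := b ^ p ^ (s - 1) with hxdef
  have hxa : x ∈ Subgroup.zpowers a := Subgroup.pow_mem _ hba _
  have hxc : x ∈ Subgroup.zpowers c := Subgroup.pow_mem _ hbc _
  obtain ⟨Z, hZc, hZn, hZo, hZm⟩ := hc.use x a p q hp hq hpq hxo hxa (ha ▸ Dvd.intro_left _ rfl)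
  obtain ⟨k, l, hco⟩ := hZo c hxc
  have hl : l ≠ 0 := by
    rintro rfl
    exact hcp ⟨k, by simpa using hco⟩
  have hk : k ≠ 0 := by
    rintro rfl
    have h1 := orderOf_dvd_of_mem_zpowers hxc
    rw [hxo, hco, pow_zero, one_mul] at h1
    exact hpq ((Nat.prime_dvd_prime_iff_eq hp hq).1 (hp.dvd_of_dvd_pow h1))
  have hi : i ≠ 0 := by
    rintro rfl
    have h1 := orderOf_dvd_of_mem_zpowers hxa
    rw [hxo, ha, pow_zero, one_mul] at h1
    exact hpq ((Nat.prime_dvd_prime_iff_eq hp hq).1 h1)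
  have haq : orderOf (a ^ p ^ i) = q := by
    rw [orderOf_pow_of_dvd (pow_ne_zero _ hp.ne_zero) (ha ▸ Dvd.intro _ rfl), ha,
      Nat.mul_div_cancel_left _ (pow_pos hp.pos _)]
  have hap : orderOf (a ^ q) = p ^ i := by
    rw [orderOf_pow_of_dvd hq.ne_zero (ha ▸ Dvd.intro_left _ rfl), ha,
      Nat.mul_div_cancel _ hq.pos]
  have hcq : orderOf (c ^ p ^ k) = q ^ l := by
    rw [orderOf_pow_of_dvd (pow_ne_zero _ hp.ne_zero) (hco ▸ Dvd.intro _ rfl), hco,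
      Nat.mul_div_cancel_left _ (pow_pos hp.pos _)]
  have hcpo : orderOf (c ^ q ^ l) = p ^ k := by
    rw [orderOf_pow_of_dvd (pow_ne_zero _ hq.ne_zero) (hco ▸ Dvd.intro_left _ rfl), hco,
      Nat.mul_div_cancel _ (pow_pos hq.pos _)]
  have hmem : ∀ (g : G) (n : ℕ), g ^ n ∈ Subgroup.zpowers g := fun g n =>
    Subgroup.npow_mem_zpowers g n
  have haqZ : a ^ p ^ i ∈ Z := hZm a _ hxa (hmem _ _) (by rw [haq]; exact cop)
  have hcqZ : c ^ p ^ k ∈ Z := hZm c _ hxc (hmem _ _) (by rw [hcq]; exact cop.pow_right _)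
  have h1 : a ^ p ^ i ∈ Subgroup.zpowers (c ^ p ^ k) :=
    cyc_mem' Z hZc _ _ haqZ hcqZ (by rw [haq, hcq]; exact dvd_pow_self q hl)
  have hle : ∀ n, Subgroup.zpowers (c ^ n) ≤ Subgroup.zpowers c := fun n => by
    rw [Subgroup.zpowers_le]; exact hmem _ _
  have hle' : ∀ n, Subgroup.zpowers (a ^ n) ≤ Subgroup.zpowers a := fun n => by
    rw [Subgroup.zpowers_le]; exact hmem _ _
  have hyc : a ^ p ^ i ∈ Subgroup.zpowers c := hle _ h1
  obtain ⟨Y, hYc, -, -, hYm⟩ := hc.use (a ^ p ^ i) a q p hq hp hpq.symm haq (hmem _ _)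
    (ha ▸ Dvd.dvd.mul_right (dvd_pow_self p hi) _)
  have hapY : a ^ q ∈ Y := hYm a _ (hmem _ _) (hmem _ _) (by rw [hap]; exact cop.symm.pow_right _)
  have hcpY : c ^ q ^ l ∈ Y := hYm c _ hyc (hmem _ _) (by rw [hcpo]; exact cop.symm.pow_right _)
  rcases le_or_gt i k with hik | hik
  · apply hac
    apply mem_of_coprime_s11 _ a (p ^ i) q (cop.pow_left _) hyc
    exact hle _ (cyc_mem' Y hYc _ _ hapY hcpY (by rw [hap, hcpo]; exact pow_dvd_pow _ hik))
  have hcpa : c ^ q ^ l ∈ Subgroup.zpowers a :=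
    hle' _ (cyc_mem' Y hYc _ _ hcpY hapY (by rw [hap, hcpo]; exact pow_dvd_pow _ hik.le))
  have hl2 : 2 ≤ l := by
    by_contra hl2
    have hl1 : l = 1 := by omega
    apply hca
    apply mem_of_coprime_s11 _ c (p ^ k) (q ^ l) (copn _ _) _ hcpa
    exact hle' (p ^ i) (cyc_mem' Z hZc _ _ hcqZ haqZ (by rw [hcq, haq, hl1, pow_one]))
  have hcom : Commute (a ^ q) (c ^ p ^ k) := by
    apply commute_of q l _ _ (a ^ p ^ i) (by omega) hcq
    · rw [hap]; exact cop.symm.pow_right _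
    · apply cyc_mem' Z hZc _ _ _ hcqZ
      · have : orderOf (MulAut.conj (a ^ q) (c ^ p ^ k)) = orderOf (c ^ p ^ k) :=
          MulEquiv.orderOf_eq _ _
        rw [MulAut.conj_apply] at this
        rw [this]
      · have : ∀ n : ℕ, ∀ z ∈ Z, a ^ n * z * (a ^ n)⁻¹ ∈ Z := by
          intro n
          induction n with
          | zero => simp
          | succ n ih =>
            intro z hz
            have := hZn a hxa _ (ih z hz)
            convert this using 1
            rw [pow_succ']
            group
        exact this q _ hcqZ
    · exact h1
    · exact haq
    · rw [mul_inv_eq_iff_eq_mul]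
      exact (Commute.refl a).pow_pow _ _
  apply hord (a ^ q * c ^ p ^ k) p q hp hq hpq
  rw [hcom.orderOf_mul_eq_mul_orderOf_of_coprime (by rw [hap, hcq]; exact copn _ _), hap, hcq]
  exact mul_dvd_mul (pow_dvd_pow _ (by omega)) (pow_dvd_pow _ hl2)

theorem top {G : Type*} [Group G] [Finite G] (hc : HC G)
    (hord : ∀ (g : G) (p q : ℕ), p.Prime → q.Prime → p ≠ q → ¬ p ^ 2 * q ^ 2 ∣ orderOf g)
    (a b d : G) (hb : b ∈ Subgroup.zpowers a) (hd : d ∈ Subgroup.zpowers a)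
    (hbd : b ∉ Subgroup.zpowers d) (hdb : d ∉ Subgroup.zpowers b) :
    ∃ p q i s : ℕ, p.Prime ∧ q.Prime ∧ p ≠ q ∧ orderOf a = p ^ i * q ∧ s ≠ 0 ∧
      (orderOf b = p ^ s ∨ orderOf d = p ^ s) := by
  have h1 : ¬ orderOf b ∣ orderOf d := fun h => hbd (cyc_mem a b d hb hd h)
  have h2 : ¬ orderOf d ∣ orderOf b := fun h => hdb (cyc_mem a d b hd hb h)
  have hb1 : orderOf b ≠ 1 := fun h => h1 (h ▸ one_dvd _)
  have hd1 : orderOf d ≠ 1 := fun h => h2 (h ▸ one_dvd _)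
  rw [Nat.dvd_iff_prime_pow_dvd_dvd] at h1 h2
  push Not at h1 h2
  obtain ⟨p, s, hp, hpb, hpd⟩ := h1
  obtain ⟨q, t, hq, hqd, hqb⟩ := h2
  have hs : s ≠ 0 := by rintro rfl; simp at hpd
  have ht : t ≠ 0 := by rintro rfl; simp at hqb
  have hpq : p ≠ q := by
    rintro rfl
    rcases le_total s t with h | h
    · exact hpd ((pow_dvd_pow p h).trans hqd)
    · exact hqb ((pow_dvd_pow p h).trans hpb)
  have hba := orderOf_dvd_of_mem_zpowers hb
  have hda := orderOf_dvd_of_mem_zpowers hd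
  have hpa : p ∣ orderOf a := ((dvd_pow_self p hs).trans hpb).trans hba
  have hqa : q ∣ orderOf a := ((dvd_pow_self q ht).trans hqd).trans hda
  obtain ⟨Z, -, -, hZo, -⟩ := hc.use (a ^ (orderOf a / p)) a p q hp hq hpq
    (orderOf_pow_orderOf_div (orderOf_pos a).ne' hpa) (Subgroup.npow_mem_zpowers _ _) hqa
  obtain ⟨i, j, hij⟩ := hZo a (Subgroup.npow_mem_zpowers _ _)
  have cop : Nat.Coprime p q := (Nat.coprime_primes hp hq).2 hpq
  have hno : ¬ (2 ≤ i ∧ 2 ≤ j) := by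
    rintro ⟨hi, hj⟩
    apply hord a p q hp hq hpq
    rw [hij]
    exact mul_dvd_mul (pow_dvd_pow _ hi) (pow_dvd_pow _ hj)
  have hi0 : i ≠ 0 := by
    rintro rfl
    rw [hij, pow_zero, one_mul] at hpa
    exact hpq ((Nat.prime_dvd_prime_iff_eq hp hq).1 (hp.dvd_of_dvd_pow hpa))
  have hj0 : j ≠ 0 := by
    rintro rfl
    rw [hij, pow_zero, mul_one] at hqa
    exact hpq ((Nat.prime_dvd_prime_iff_eq hq hp).1 (hq.dvd_of_dvd_pow hqa)).symm
  rcases (by omega : j = 1 ∨ i = 1) with rfl | rfl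
  · have htj : t ≤ 1 := by
      have h3 := hqd.trans hda
      rw [hij] at h3
      have h4 := (Nat.Coprime.pow t i cop.symm).dvd_of_dvd_mul_left h3
      exact (Nat.pow_dvd_pow_iff_le_right hq.one_lt).1 h4
    have ht1 : t = 1 := by omega
    subst ht1
    rw [pow_one] at hqb hij
    rw [hij] at hba
    obtain ⟨e, _, he⟩ := (Nat.dvd_prime_pow hp).1 
      (((hq.coprime_iff_not_dvd.2 hqb).symm).dvd_of_dvd_mul_right hba)
    refine ⟨p, q, i, e, hp, hq, hpq, hij, ?_, Or.inl he⟩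
    rintro rfl
    exact hb1 (by simpa using he)
  · have hsj : s ≤ 1 := by
      have h3 := hpb.trans hba
      rw [hij] at h3
      have h4 := (Nat.Coprime.pow s j cop).dvd_of_dvd_mul_right h3
      exact (Nat.pow_dvd_pow_iff_le_right hp.one_lt).1 h4
    have hs1 : s = 1 := by omega
    subst hs1
    rw [pow_one] at hpd hij
    rw [hij] at hda
    obtain ⟨e, _, he⟩ := (Nat.dvd_prime_pow hq).1 
      (((hp.coprime_iff_not_dvd.2 hpd).symm).dvd_of_dvd_mul_left hda)
    refine ⟨q, p, j, e, hq, hp, hpq.symm, by rw [hij, mul_comm], ?_, Or.inr he⟩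
    rintro rfl
    exact hd1 (by simpa using he)

theorem notpow {G : Type*} [Group G] [Finite G] (p : ℕ) (hp : p.Prime)
    (a b d : G) (hb : b ∈ Subgroup.zpowers a) (hd : d ∈ Subgroup.zpowers a)
    (hbd : b ∉ Subgroup.zpowers d) (hdb : d ∉ Subgroup.zpowers b) :
    ¬ ∃ k, orderOf a = p ^ k := by
  rintro ⟨k, hk⟩
  have hba := orderOf_dvd_of_mem_zpowers hb
  have hda := orderOf_dvd_of_mem_zpowers hd
  rw [hk] at hba hda
  obtain ⟨m, _, hm⟩ := (Nat.dvd_prime_pow hp).1 hba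
  obtain ⟨n, _, hn⟩ := (Nat.dvd_prime_pow hp).1 hda
  rcases le_total m n with h | h
  · exact hbd (cyc_mem a b d hb hd (by rw [hm, hn]; exact pow_dvd_pow _ h))
  · exact hdb (cyc_mem a d b hd hb (by rw [hm, hn]; exact pow_dvd_pow _ h))

/-- There is no "periodic" induced path around a source. -/
theorem seq_false {G : Type*} [Group G] [Finite G] (hc : HC G)
    (hord : ∀ (g : G) (p q : ℕ), p.Prime → q.Prime → p ≠ q → ¬ p ^ 2 * q ^ 2 ∣ orderOf g)
    (g : ℤ → G)
    (h1 : ∀ k, g k ∈ Subgroup.zpowers (g (k + 1)) ∨ g (k + 1) ∈ Subgroup.zpowers (g k))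
    (h2 : ∀ k, g k ∉ Subgroup.zpowers (g (k + 2)))
    (h3 : ∀ k, g (k + 2) ∉ Subgroup.zpowers (g k)) : False := by
  have tr : ∀ {x y z : G}, x ∈ Subgroup.zpowers y → y ∈ Subgroup.zpowers z →
    x ∈ Subgroup.zpowers z := fun hx hy => (Subgroup.zpowers_le.2 hy) hx
  -- source at k
  have main : ∀ k, g (k + 1) ∈ Subgroup.zpowers (g k) → False := by
    intro k hk
    have e1 : g (k - 1) ∈ Subgroup.zpowers (g k) := by
      have := h1 (k - 1)
      have h3' := h3 (k - 1)
      rw [show k - 1 + 1 = k by ring] at this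
      rw [show k - 1 + 2 = k + 1 by ring] at h3'
      exact this.resolve_right fun h => h3' (tr hk h)
    have e2 : g (k + 1) ∈ Subgroup.zpowers (g (k + 2)) := by
      have := h1 (k + 1)
      rw [show k + 1 + 1 = k + 2 by ring] at this
      exact this.resolve_right fun h => h3 k (tr h hk)
    have e3 : g (k + 3) ∈ Subgroup.zpowers (g (k + 2)) := by
      have := h1 (k + 2)
      have h2' := h2 (k + 1)
      rw [show k + 2 + 1 = k + 3 by ring] at this
      rw [show k + 1 + 2 = k + 3 by ring] at h2'
      exact this.resolve_left fun h => h2' (tr e2 h)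
    have e4 : g (k - 1) ∈ Subgroup.zpowers (g (k - 2)) := by
      have := h1 (k - 2)
      have h2' := h2 (k - 2)
      rw [show k - 2 + 1 = k - 1 by ring] at this
      rw [show k - 2 + 2 = k by ring] at h2'
      exact this.resolve_left fun h => h2' (tr h e1)
    have e5 : g (k - 3) ∈ Subgroup.zpowers (g (k - 2)) := by
      have := h1 (k - 3)
      have h3' := h3 (k - 3)
      rw [show k - 3 + 1 = k - 2 by ring] at this
      rw [show k - 3 + 2 = k - 1 by ring] at h3'
      exact this.resolve_right fun h => h3' (tr e4 h)
    have n1 := h2 (k - 1)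
    have n1' := h3 (k - 1)
    have n2 := h2 (k + 1)
    have n2' := h3 (k + 1)
    have n3 := h2 (k - 2)
    have n3' := h3 (k - 2)
    have n4 := h2 (k - 3)
    have n4' := h3 (k - 3)
    rw [show k - 1 + 2 = k + 1 by ring] at n1 n1'
    rw [show k + 1 + 2 = k + 3 by ring] at n2 n2'
    rw [show k - 2 + 2 = k by ring] at n3 n3'
    rw [show k - 3 + 2 = k - 1 by ring] at n4 n4'
    obtain ⟨p, q, i, s, hp, hq, hpq, ha, hs, hb | hb⟩ := top hc hord (g k) _ _ hk e1 n1' n1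
    · exact core hc hord p q i s hp hq hpq _ _ _ ha hb hs hk e2
        (notpow p hp _ _ _ e2 e3 n2 n2') (h2 k) (h3 k)
    · exact core hc hord p q i s hp hq hpq _ _ _ ha hb hs e1 e4
        (notpow p hp _ _ _ e4 e5 n4' n4) n3' n3
  rcases h1 0 with h | h
  · have := h1 1
    rw [zero_add] at h
    have h2' := h2 0
    rw [zero_add] at h2'
    refine main 1 (this.resolve_left fun h' => ?_)
    exact h2' (tr h h')
  · exact main 0 h

theorem stmt11 (G : Type*) [Group G] [Fintype G]
    (hord : ∀ (g : G) (p q : ℕ), p.Prime → q.Prime → p ≠ q → ¬ p ^ 2 * q ^ 2 ∣ orderOf g)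
    (hcent : ∀ (x : G) (p : ℕ), p.Prime → orderOf x = p →
      (∀ y ∈ Subgroup.centralizer {x}, ∃ k : ℕ, orderOf y = p ^ k) ∨
      (∃ (q : ℕ) (Z P : Subgroup G), q.Prime ∧ q ≠ p ∧
        Z ≤ Subgroup.centralizer {x} ∧ P ≤ Subgroup.centralizer {x} ∧
        IsCyclic Z ∧ (∀ z ∈ Z, ∃ k : ℕ, orderOf z = q ^ k) ∧
        (∀ y ∈ P, ∃ k : ℕ, orderOf y = p ^ k) ∧
        (∀ g ∈ Subgroup.centralizer {x}, ∀ z ∈ Z, g * z * g⁻¹ ∈ Z) ∧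
        Z ⊓ P = ⊥ ∧ Z ⊔ P = Subgroup.centralizer {x})) :
    IsChordal (powerGraph G) := by
  intro n hn
  refine ⟨fun f => ?_⟩
  obtain ⟨n, rfl⟩ : ∃ m, n = m + 2 := ⟨n - 2, by omega⟩
  have hadj : ∀ u v : Fin (n + 2), (u ≠ v ∧ (f u ∈ Subgroup.zpowers (f v) ∨
      f v ∈ Subgroup.zpowers (f u))) ↔ (u - v = 1 ∨ v - u = 1) := by
    intro u v
    rw [← SimpleGraph.cycleGraph_adj, ← f.map_adj_iff]
    unfold powerGraph
    exact and_congr f.injective.ne_iff.symm Iff.rfl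
  have v2 : ((2 : Fin (n + 2)) : ℕ) = 2 := Nat.mod_eq_of_lt (show 2 < n + 2 by omega)
  have v1 : ((1 : Fin (n + 2)) : ℕ) = 1 := Nat.mod_eq_of_lt (show 1 < n + 2 by omega)
  have h112 : (1 : Fin (n + 2)) + 1 = 2 := by
    rw [Fin.ext_iff, Fin.val_add, v2, v1, Nat.mod_eq_of_lt (by omega)]
  have h21 : (2 : Fin (n + 2)) ≠ 1 := by
    intro h; rw [Fin.ext_iff, v1, v2] at h; omega
  have h20 : (2 : Fin (n + 2)) ≠ 0 := by
    intro h; rw [Fin.ext_iff, v2] at h; simp at h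
  have h30 : (2 : Fin (n + 2)) + 1 ≠ 0 := by
    intro h; rw [Fin.ext_iff, Fin.val_add, v2, v1, Nat.mod_eq_of_lt (by omega)] at h; simp at h
  have non : ∀ u : Fin (n + 2), ¬ (f u ∈ Subgroup.zpowers (f (u + 2)) ∨
      f (u + 2) ∈ Subgroup.zpowers (f u)) := by
    intro u h
    rcases (hadj u (u + 2)).1 ⟨by simpa using h20, h⟩ with h | h
    · apply h30
      rw [← h]; abel
    · apply h21
      rw [← h]; abel
  apply seq_false (G := G) hcent hord (fun k : ℤ => f (k • (1 : Fin (n + 2))))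
  · intro k
    have := (hadj (k • 1) (k • 1 + 1)).2 (Or.inr (by abel))
    rw [← add_one_zsmul] at this
    exact this.2
  · intro k h
    have e : (k + 2) • (1 : Fin (n + 2)) = k • 1 + 2 := by
      rw [add_zsmul, two_zsmul, h112]
    rw [e] at h
    exact non _ (Or.inl h)
  · intro k h
    have e : (k + 2) • (1 : Fin (n + 2)) = k • 1 + 2 := by
      rw [add_zsmul, two_zsmul, h112]
    rw [e] at h
    exact non _ (Or.inr h)
end

section
/- Let G be a finite group containing commuting elements x and y whose orders are coprime, such that the cyclic subgroup ⟨x⟩ is not a normal subgroup of the centralizer C_G(y) and the cyclic subgroup ⟨y⟩ is not a normal subgroup of the centralizer C_G(x). Then the power graph of G is not chordal. -/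
theorem aux_cycle {G : Type*} [Group G] [Finite G] (v : ℕ → G)
    (h1 : ∀ n, (v n ∈ Subgroup.zpowers (v (n+1)) ∨ v (n+1) ∈ Subgroup.zpowers (v n)))
    (h1' : ∀ n, Subgroup.zpowers (v n) ≠ Subgroup.zpowers (v (n+1)))
    (h2 : ∀ n, Subgroup.zpowers (v n) ≠ Subgroup.zpowers (v (n+2)))
    (h3 : ∀ a b, (v a ∈ Subgroup.zpowers (v b)) →
      Subgroup.zpowers (v a) ≠ Subgroup.zpowers (v b) → a % 2 ≠ b % 2) :
    ¬ IsChordal (powerGraph G) := by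
  classical
  let A : ℕ → ℕ → Prop := fun a b =>
    (v a ∈ Subgroup.zpowers (v b) ∨ v b ∈ Subgroup.zpowers (v a)) ∧
      Subgroup.zpowers (v a) ≠ Subgroup.zpowers (v b)
  have Asymm : ∀ a b, A a b → A b a := fun a b h => ⟨h.1.symm, h.2.symm⟩
  have A1 : ∀ n, A n (n+1) := fun n => ⟨h1 n, h1' n⟩
  have Apar : ∀ a b, A a b → a % 2 ≠ b % 2 := by
    rintro a b ⟨h | h, hn⟩
    · exact h3 a b h hn
    · exact (h3 b a h hn.symm).symm
  have Acongr : ∀ a b c, Subgroup.zpowers (v a) = Subgroup.zpowers (v b) → A a c → A b c := by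
    intro a b c he h
    simp only [A, ← Subgroup.zpowers_le] at h ⊢
    rwa [he] at h
  -- repeated subgroup gives a chord
  have rep : ∀ a b, a < b → Subgroup.zpowers (v a) = Subgroup.zpowers (v b) →
      a + 3 ≤ b ∧ A a (b-1) := by
    intro a b hab he
    have n1 : b ≠ a + 1 := by rintro rfl; exact h1' a he
    have n2 : b ≠ a + 2 := by rintro rfl; exact h2 a he
    refine ⟨by omega, ?_⟩
    have := A1 (b-1)
    rw [show b - 1 + 1 = b by omega] at this
    exact Acongr b a _ he.symm (Asymm _ _ this)
  have ex : ∃ d, 2 ≤ d ∧ ∃ i, A i (i+d) := by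
    obtain ⟨a, b, hne, he⟩ := Finite.exists_ne_map_eq_of_infinite
      (fun n => Subgroup.zpowers (v n))
    rcases lt_or_gt_of_ne hne with h | h
    · obtain ⟨h3, h4⟩ := rep a b h he
      exact ⟨b-1-a, by omega, a, by rwa [show a + (b-1-a) = b-1 by omega]⟩
    · obtain ⟨h3, h4⟩ := rep b a h he.symm
      exact ⟨a-1-b, by omega, b, by rwa [show b + (a-1-b) = a-1 by omega]⟩
  obtain ⟨hd2, i, hi⟩ := Nat.find_spec ex
  have hmin : ∀ a b, a + 2 ≤ b → A a b → Nat.find ex ≤ b - a := by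
    intro a b hab h
    exact Nat.find_min' ex ⟨by omega, a, by rwa [show a + (b-a) = b by omega]⟩
  generalize Nat.find ex = d at *
  have hd3 : 3 ≤ d := by have := Apar _ _ hi; omega
  have inj : ∀ a b, a < b → b ≤ d → Subgroup.zpowers (v (i+a)) ≠ Subgroup.zpowers (v (i+b)) := by
    intro a b hab hb he
    obtain ⟨q1, q2⟩ := rep (i+a) (i+b) (by omega) he
    have := hmin _ _ (by omega) q2
    omega
  have adj : ∀ a b, a < b → b ≤ d → (A (i+a) (i+b) ↔ (b = a + 1 ∨ (a = 0 ∧ b = d))) := by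
    intro a b hab hb
    constructor
    · intro h
      by_cases hb1 : b = a + 1
      · exact Or.inl hb1
      · have := hmin _ _ (by omega) h
        omega
    · rintro (rfl | ⟨rfl, rfl⟩)
      · exact A1 (i+a)
      · exact hi
  have inj' : ∀ a b, a ≤ d → b ≤ d → v (i+a) = v (i+b) → a = b := by
    intro a b ha hb he
    rcases lt_trichotomy a b with h | h | h
    · exact absurd (by rw [he]) (inj a b h hb)
    · exact h
    · exact absurd (by rw [he]) (inj b a h ha)
  have padj : ∀ a b, a < b → b ≤ d → ((powerGraph G).Adj (v (i+a)) (v (i+b)) ↔ A (i+a) (i+b)) := by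
    intro a b hab hb
    have := inj a b hab hb
    have h' : v (i+a) ≠ v (i+b) := fun h => this (by rw [h])
    simp [powerGraph, A, this, h']
  intro hch
  refine (hch (d+1) (by omega)).false ⟨⟨fun a => v (i + a.val), ?_⟩, ?_⟩
  · intro a b h
    exact Fin.ext (inj' _ _ (by omega) (by omega) h)
  · intro a b
    have key : ∀ a b : Fin (d+1), a < b → ((powerGraph G).Adj (v (i+a)) (v (i+b)) ↔
        (SimpleGraph.cycleGraph (d+1)).Adj a b) := by
      intro a b hab
      have hab' : a.val < b.val := hab
      rw [padj _ _ hab' (by omega), adj _ _ hab' (by omega), SimpleGraph.cycleGraph_adj']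
      rw [Fin.coe_sub_iff_lt.2 hab, Fin.coe_sub_iff_le.2 hab.le]
      omega
    rcases lt_trichotomy a b with h | h | h
    · exact key a b h
    · subst h; simp
    · rw [SimpleGraph.adj_comm, SimpleGraph.adj_comm (SimpleGraph.cycleGraph _)]
      exact key b a h

theorem aux_mem {G : Type*} [Group G] [Finite G] {x y : G} (hc : Commute x y)
    (hcop : Nat.Coprime (orderOf x) (orderOf y)) : x ∈ Subgroup.zpowers (x * y) := by
  obtain ⟨k, k1, k2⟩ := Nat.chineseRemainder hcop 1 0
  refine ⟨k, ?_⟩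
  have e1 : x ^ k = x ^ 1 := pow_eq_pow_iff_modEq.2 k1
  have e2 : y ^ k = y ^ 0 := pow_eq_pow_iff_modEq.2 k2
  simp only [zpow_natCast]
  rw [hc.mul_pow, e1, e2]; simp

theorem aux_mem2 {G : Type*} [Group G] [Finite G] {x y z : G} (hc : Commute x y)
    (hcop : Nat.Coprime (orderOf x) (orderOf y)) (hz : z ∈ Subgroup.zpowers (x * y))
    (ho : orderOf z = orderOf x) : z ∈ Subgroup.zpowers x := by
  rw [← mem_powers_iff_mem_zpowers] at hz
  obtain ⟨k, rfl⟩ := hz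
  simp only at *
  have h := pow_orderOf_eq_one ((x*y)^k)
  rw [ho, ← pow_mul, hc.mul_pow, mul_comm k, pow_mul, pow_orderOf_eq_one, one_pow, one_mul] at h
  have := hcop.symm.dvd_of_dvd_mul_left (orderOf_dvd_of_pow_eq_one h)
  rw [hc.mul_pow, orderOf_dvd_iff_pow_eq_one.1 this, mul_one]
  exact ⟨k, by simp⟩

theorem aux_conj {G : Type*} [Group G] (s a b : G) :
    s * a * s⁻¹ ∈ Subgroup.zpowers (s * b * s⁻¹) ↔ a ∈ Subgroup.zpowers b := by
  simp only [Subgroup.mem_zpowers_iff, conj_zpow]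
  simp

theorem aux_conj_eq {G : Type*} [Group G] (s a b : G) :
    Subgroup.zpowers (s * a * s⁻¹) = Subgroup.zpowers (s * b * s⁻¹) ↔
      Subgroup.zpowers a = Subgroup.zpowers b := by
  simp only [le_antisymm_iff, Subgroup.zpowers_le, aux_conj]

theorem aux_conj_order {G : Type*} [Group G] (s a : G) : orderOf (s * a * s⁻¹) = orderOf a := by
  have := orderOf_injective (MulAut.conj s).toMonoidHom (MulAut.conj s).injective a
  simpa using this

theorem stmt12 (G : Type*) [Group G] [Fintype G] (x y : G)
    (hcomm : x * y = y * x) (hcop : Nat.Coprime (orderOf x) (orderOf y))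
    (hx : ¬ ∀ g ∈ Subgroup.centralizer {y}, ∀ a ∈ Subgroup.zpowers x,
      g * a * g⁻¹ ∈ Subgroup.zpowers x)
    (hy : ¬ ∀ g ∈ Subgroup.centralizer {x}, ∀ a ∈ Subgroup.zpowers y,
      g * a * g⁻¹ ∈ Subgroup.zpowers y) :
    ¬ IsChordal (powerGraph G) := by
  have hc : Commute x y := hcomm
  have get : ∀ x y : G, (¬ ∀ g ∈ Subgroup.centralizer {y}, ∀ a ∈ Subgroup.zpowers x,
      g * a * g⁻¹ ∈ Subgroup.zpowers x) →
      1 < orderOf x ∧ ∃ g, g * y * g⁻¹ = y ∧ g * x * g⁻¹ ∉ Subgroup.zpowers x := by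
    intro x y h
    push Not at h
    obtain ⟨g, hg, a, ha, hn⟩ := h
    have hgx : g * x * g⁻¹ ∉ Subgroup.zpowers x := by
      intro h
      obtain ⟨k, rfl⟩ := ha
      apply hn
      simp only [← conj_zpow]
      exact Subgroup.zpow_mem _ h k
    refine ⟨?_, g, ?_, hgx⟩
    · have := orderOf_pos x
      have : orderOf x ≠ 1 := by
        intro h
        rw [orderOf_eq_one_iff] at h
        subst h; simp at hgx
      omega
    · rw [Subgroup.mem_centralizer_singleton_iff] at hg
      rw [mul_inv_eq_iff_eq_mul]
      first | exact hg | exact hg.symm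
  obtain ⟨hp, g, hgy, hgx⟩ := get x y hx
  obtain ⟨hq, h, hhx, hhy⟩ := get y x hy
  have mx : x ∈ Subgroup.zpowers (x * y) := aux_mem hc hcop
  have my : y ∈ Subgroup.zpowers (x * y) := by
    rw [hcomm]; exact aux_mem hc.symm hcop.symm
  have oxy : orderOf (x * y) = orderOf x * orderOf y := hc.orderOf_mul_eq_mul_orderOf_of_coprime hcop
  have nx : g * x * g⁻¹ ∉ Subgroup.zpowers (x * y) := fun hz =>
    hgx (aux_mem2 hc hcop hz (aux_conj_order _ _))
  have ny : h * y * h⁻¹ ∉ Subgroup.zpowers (x * y) := fun hz =>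
    hhy (aux_mem2 hc.symm hcop.symm (hcomm ▸ hz) (aux_conj_order _ _))
  let base : ℕ → G := fun r => if r = 0 then x else if r = 1 then x * y else if r = 2 then y
    else g * (x * y) * g⁻¹
  let v : ℕ → G := fun n => (g*h)^(n/4) * base (n%4) * ((g*h)^(n/4))⁻¹
  have v0 : ∀ m, v (4*m) = (g*h)^m * x * ((g*h)^m)⁻¹ := by
    intro m; simp [v, base]
  have v1 : ∀ m, v (4*m+1) = (g*h)^m * (x*y) * ((g*h)^m)⁻¹ := by
    intro m
    simp only [v, base, show (4*m+1)/4 = m by omega, show (4*m+1)%4 = 1 by omega]; simp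
  have v2 : ∀ m, v (4*m+2) = (g*h)^m * y * ((g*h)^m)⁻¹ := by
    intro m
    simp only [v, base, show (4*m+2)/4 = m by omega, show (4*m+2)%4 = 2 by omega]; simp
  have v3 : ∀ m, v (4*m+3) = (g*h)^m * (g*(x*y)*g⁻¹) * ((g*h)^m)⁻¹ := by
    intro m
    simp only [v, base, show (4*m+3)/4 = m by omega, show (4*m+3)%4 = 3 by omega]; simp
  have v4 : ∀ m, v (4*m+4) = (g*h)^m * (g*x*g⁻¹) * ((g*h)^m)⁻¹ := by
    intro m
    rw [show 4*m+4 = 4*(m+1) by ring, v0, pow_succ]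
    conv_rhs => rw [← hhx]
    group
  have v5 : ∀ m, v (4*m+5) = (g*h)^m * (g*(h*(x*y)*h⁻¹)*g⁻¹) * ((g*h)^m)⁻¹ := by
    intro m
    rw [show 4*m+5 = 4*(m+1)+1 by ring, v1, pow_succ]
    group
  have v2' : ∀ m, v (4*m+2) = (g*h)^m * (g*y*g⁻¹) * ((g*h)^m)⁻¹ := by
    intro m; rw [v2, hgy]
  have v6 : ∀ m, v (4*m+6) = (g*h)^m * (g*(h*y*h⁻¹)*g⁻¹) * ((g*h)^m)⁻¹ := by
    intro m
    rw [show 4*m+6 = 4*(m+1)+2 by ring, v2, pow_succ]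
    group
  have split : ∀ n, ∃ m, n = 4*m ∨ n = 4*m+1 ∨ n = 4*m+2 ∨ n = 4*m+3 := fun n =>
    ⟨n/4, by omega⟩
  have o0 : ∀ m, orderOf (v (4*m)) = orderOf x := fun m => by rw [v0, aux_conj_order]
  have o1 : ∀ m, orderOf (v (4*m+1)) = orderOf x * orderOf y := fun m => by
    rw [v1, aux_conj_order, oxy]
  have o2 : ∀ m, orderOf (v (4*m+2)) = orderOf y := fun m => by rw [v2, aux_conj_order]
  have o3 : ∀ m, orderOf (v (4*m+3)) = orderOf x * orderOf y := fun m => by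
    rw [v3, aux_conj_order, aux_conj_order, oxy]
  have zo : ∀ a b : G, Subgroup.zpowers a = Subgroup.zpowers b → orderOf a = orderOf b := by
    intro a b h
    rw [← Nat.card_zpowers, ← Nat.card_zpowers, h]
  have zd : ∀ a b : G, a ∈ Subgroup.zpowers b → orderOf a ∣ orderOf b := by
    intro a b h
    exact orderOf_dvd_of_mem_zpowers h
  have ze : ∀ a b : G, a ∈ Subgroup.zpowers b → orderOf a = orderOf b →
      Subgroup.zpowers a = Subgroup.zpowers b := by
    intro a b h e
    apply Subgroup.eq_of_le_of_card_ge (Subgroup.zpowers_le.2 h)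
    rw [Nat.card_zpowers, Nat.card_zpowers, e]
  have pl : orderOf x < orderOf x * orderOf y := by nlinarith
  have ql : orderOf y < orderOf x * orderOf y := by nlinarith
  have npq : ¬ orderOf x ∣ orderOf y := fun hd => by
    have := Nat.Coprime.eq_one_of_dvd hcop hd; omega
  have nqp : ¬ orderOf y ∣ orderOf x := fun hd => by
    have := Nat.Coprime.eq_one_of_dvd hcop.symm hd; omega
  apply aux_cycle v
  · intro n
    obtain ⟨m, rfl | rfl | rfl | rfl⟩ := split n
    · left; rw [v0, v1, aux_conj]; exact mx
    · right; rw [v1, v2, aux_conj]; exact my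
    · left; rw [v2', v3, aux_conj, aux_conj]; exact my
    · right; rw [v3, v4, aux_conj, aux_conj]; exact mx
  · intro n he
    have he := zo _ _ he
    obtain ⟨m, rfl | rfl | rfl | rfl⟩ := split n
    · rw [o0, o1] at he; omega
    · rw [o1, o2] at he; omega
    · rw [o2, o3] at he; omega
    · rw [o3, show 4*m+3+1 = 4*(m+1) by ring, o0] at he; omega
  · intro n he
    obtain ⟨m, rfl | rfl | rfl | rfl⟩ := split n
    · rw [v0, v2, aux_conj_eq] at he
      have := zo _ _ he
      exact npq (by rw [this])
    · rw [v1, v3, aux_conj_eq] at he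
      apply nx
      rw [he, aux_conj]; exact mx
    · rw [v2, v4, aux_conj_eq] at he
      have := zo _ _ he
      rw [aux_conj_order] at this
      exact npq (by rw [this])
    · rw [v3, v5, aux_conj_eq, aux_conj_eq] at he
      apply ny
      rw [he, aux_conj]; exact my
  · intro a b hab hne hpar
    have hd := zd _ _ hab
    have hno : orderOf (v a) ≠ orderOf (v b) := fun e => hne (ze _ _ hab e)
    obtain ⟨m, rfl | rfl | rfl | rfl⟩ := split a <;>
    obtain ⟨k, rfl | rfl | rfl | rfl⟩ := split b <;>
    first
    | (exfalso; omega)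
    | (simp only [o0, o1, o2, o3] at hd hno
       first | exact hno rfl | exact npq hd | exact nqp hd)
end

section
/- Let G be a finite group, let A be a commutative subgroup of G, and let t ∈ G be an element with t ∉ A, t² = 1, and t·a·t⁻¹ = a⁻¹ for all a ∈ A, such that G is generated by A together with t (so G is the generalized dihedral group A ⋊ C₂ with C₂ acting by inversion). Then the power graph of G is chordal if and only if the power graph of A is chordal. -/
theorem adj_pg {G : Type*} [Group G] (x y : G) : (powerGraph G).Adj x y ↔
    x ≠ y ∧ (x ∈ Subgroup.zpowers y ∨ y ∈ Subgroup.zpowers x) := by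
  simp [powerGraph, SimpleGraph.fromRel_adj]

theorem adj_sub {G : Type*} [Group G] (A : Subgroup G) (x y : A) :
    (powerGraph G).Adj (x : G) (y : G) ↔ (powerGraph A).Adj x y := by
  rw [adj_pg, adj_pg]
  simp only [Subgroup.mem_zpowers_iff, ne_eq, Subtype.ext_iff, Subgroup.coe_zpow]

theorem zpowers_invol {G : Type*} [Group G] {x y : G} (hx : x * x = 1)
    (h : y ∈ Subgroup.zpowers x) : y = 1 ∨ y = x := by
  obtain ⟨k, rfl⟩ := Subgroup.mem_zpowers_iff.1 h
  rcases Int.even_or_odd' k with ⟨m, rfl | rfl⟩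
  · left
    rw [zpow_mul, zpow_two, hx, one_zpow]
  · right
    rw [zpow_add, zpow_mul, zpow_two, hx, one_zpow, one_mul, zpow_one]

theorem outside_invol {G : Type*} [Group G] (A : Subgroup G) (t : G)
    (ht2 : t ^ 2 = 1)
    (hinv : ∀ a ∈ A, t * a * t⁻¹ = a⁻¹)
    (hgen : Subgroup.closure (A ∪ {t} : Set G) = ⊤) (x : G) (hx : x ∉ A) : x * x = 1 := by
  have htt : t * t = 1 := by rw [← pow_two, ht2]
  have hti : t⁻¹ = t := inv_eq_of_mul_eq_one_left htt
  rw [hti] at hinv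
  have key : ∀ g : G, g ∈ A ∨ g * t ∈ A := by
    intro g
    have hg : g ∈ Subgroup.closure (A ∪ {t} : Set G) := by rw [hgen]; trivial
    induction hg using Subgroup.closure_induction with
    | mem x hx =>
      rcases hx with hx | hx
      · exact Or.inl hx
      · right
        rw [Set.mem_singleton_iff.1 hx, htt]
        exact A.one_mem
    | one => exact Or.inl A.one_mem
    | mul x y _ _ h1 h2 =>
      rcases h1 with h1 | h1 <;> rcases h2 with h2 | h2
      · exact Or.inl (A.mul_mem h1 h2)
      · right
        rw [mul_assoc]
        exact A.mul_mem h1 h2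
      · right
        have : x * y * t = (x * t) * (t * y * t) := by
          rw [show (x * t) * (t * y * t) = x * (t * t) * y * t by group, htt, mul_one]
        rw [this, hinv y h2]
        exact A.mul_mem h1 (A.inv_mem h2)
      · left
        have : x * y = (x * t) * (t * (y * t) * t) := by
          rw [show (x * t) * (t * (y * t) * t) = x * (t * t) * y * (t * t) by
            simp only [mul_assoc], htt, mul_one, mul_one]
        rw [this, hinv _ h2]
        exact A.mul_mem h1 (A.inv_mem h2)
    | inv x _ h =>
      rcases h with h | h
      · exact Or.inl (A.inv_mem h)
      · right
        have h3 := hinv _ h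
        rw [mul_assoc, mul_assoc, htt, mul_one] at h3
        have h4 : x⁻¹ * t = (t * x)⁻¹ := by rw [mul_inv_rev, hti]
        rw [h4, h3, inv_inv]
        exact h
  have h := (key x).resolve_left hx
  have h3 := hinv _ h
  rw [mul_assoc, mul_assoc, htt, mul_one, mul_inv_rev, hti] at h3
  have := mul_left_cancel h3
  rw [eq_inv_iff_mul_eq_one] at this
  exact this

theorem stmt13 (G : Type*) [Group G] [Fintype G] (A : Subgroup G) (t : G)
    (hA : ∀ a ∈ A, ∀ b ∈ A, a * b = b * a)
    (ht : t ∉ A) (ht2 : t ^ 2 = 1)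
    (hinv : ∀ a ∈ A, t * a * t⁻¹ = a⁻¹)
    (hgen : Subgroup.closure (A ∪ {t} : Set G) = ⊤) :
    IsChordal (powerGraph G) ↔ IsChordal (powerGraph A) := by
  have inv := outside_invol A t ht2 hinv hgen
  have nb : ∀ x y : G, x ∉ A → (powerGraph G).Adj x y → y = 1 := by
    intro x y hx hxy
    rw [adj_pg] at hxy
    obtain ⟨hne, h | h⟩ := hxy
    · have hy : y ∉ A := fun hy => hx ((Subgroup.zpowers_le.2 hy) h)
      rcases zpowers_invol (inv y hy) h with h | h
      · exact absurd (h ▸ A.one_mem) hx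
      · exact absurd h hne
    · rcases zpowers_invol (inv x hx) h with h | h
      · exact h
      · exact absurd h.symm hne
  constructor
  · intro h n hn
    refine ⟨fun e => (h n hn).false (e.trans ⟨⟨Subtype.val, Subtype.val_injective⟩, ?_⟩)⟩
    intro a b
    exact adj_sub A a b
  · intro h n hn
    refine ⟨fun e => ?_⟩
    have mem : ∀ i, e i ∈ A := by
      intro i
      by_contra hi
      obtain ⟨m, rfl⟩ : ∃ m, n = m + 4 := ⟨n - 4, by omega⟩
      have a1 : (SimpleGraph.cycleGraph (m + 4)).Adj i (i + 1) := by
        rw [SimpleGraph.cycleGraph_adj]; right; simp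
      have a2 : (SimpleGraph.cycleGraph (m + 4)).Adj i (i - 1) := by
        rw [SimpleGraph.cycleGraph_adj]; left; simp
      have e1 := nb _ _ hi (e.map_rel_iff.2 a1)
      have e2 := nb _ _ hi (e.map_rel_iff.2 a2)
      have e3 : i + 1 = i - 1 := e.injective (e1.trans e2.symm)
      have e4 : (1 : Fin (m + 4)) + 1 = 0 := by
        have : i + (1 + 1) = i + 0 := by
          rw [← add_assoc, e3]; simp
        exact add_left_cancel this
      have e5 := congrArg Fin.val e4
      rw [Fin.val_add] at e5
      simp at e5
      rw [Nat.mod_eq_of_lt (by omega)] at e5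
      omega
    refine (h n hn).false ⟨⟨fun i => ⟨e i, mem i⟩, ?_⟩, ?_⟩
    · intro i j hij
      exact e.injective (congrArg Subtype.val hij)
    · intro i j
      exact (adj_sub A ⟨e i, mem i⟩ ⟨e j, mem j⟩).symm.trans e.map_rel_iff
end

section
/- Let n ≥ 1 and let Q_{4n} be the generalized quaternion (dicyclic) group of order 4n, with presentation ⟨x, y | x^{2n} = y⁴ = 1, x^n = y², y⁻¹xy = x⁻¹⟩. The power graph of Q_{4n} is chordal if and only if there exist an odd prime p and natural numbers a, b with 2n = 2^a · p^b and a ≤ 1 or b ≤ 1. -/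
open QuaternionGroup in
lemma aux_a_zpow {n : ℕ} (j : ZMod (2*n)) (k : ℤ) :
    (a j : QuaternionGroup n) ^ k = a ((k : ZMod (2*n)) * j) := by
  have hn : ∀ m : ℕ, (a j : QuaternionGroup n) ^ m = a ((m : ZMod (2*n)) * j) := by
    intro m
    induction m with
    | zero => simp
    | succ m ih => rw [pow_succ, ih, a_mul_a]; congr 1; push_cast; ring
  cases k with
  | ofNat m => simpa using hn m
  | negSucc m =>
    rw [zpow_negSucc, hn, inv_eq_iff_mul_eq_one, a_mul_a, ← a_zero]
    congr 1; push_cast; ring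

def auxE {n : ℕ} (i : ZMod (2*n)) : ℕ := Nat.gcd i.val (2*n)

open QuaternionGroup in
lemma aux_mem_s14 {n : ℕ} (hn : 1 ≤ n) (i j : ZMod (2*n)) :
    (a i : QuaternionGroup n) ∈ Subgroup.zpowers (a j : QuaternionGroup n) ↔
      auxE j ∣ auxE i := by
  have : NeZero (2*n) := ⟨by omega⟩
  rw [Subgroup.mem_zpowers_iff]
  have hi : ((i.val : ℤ) : ZMod (2*n)) = i := by simp
  have hj : ((j.val : ℤ) : ZMod (2*n)) = j := by simp
  constructor
  · rintro ⟨k, hk⟩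
    rw [aux_a_zpow] at hk
    have hk : (k : ZMod (2*n)) * j = i := by simpa using hk
    refine Nat.dvd_gcd ?_ (Nat.gcd_dvd_right _ _)
    rw [← hi, ← hj, ← Int.cast_mul, ZMod.intCast_eq_intCast_iff_dvd_sub] at hk
    have h1 : ((auxE j : ℕ) : ℤ) ∣ i.val - k * j.val :=
      (Int.natCast_dvd_natCast.2 (Nat.gcd_dvd_right _ _)).trans hk
    have h2 : ((auxE j : ℕ) : ℤ) ∣ k * j.val :=
      Dvd.dvd.mul_left (Int.natCast_dvd_natCast.2 (Nat.gcd_dvd_left _ _)) _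
    have := dvd_add h1 h2
    rw [sub_add_cancel] at this
    exact_mod_cast this
  · intro h
    have h : auxE j ∣ i.val := h.trans (Nat.gcd_dvd_left _ _)
    obtain ⟨c, hc⟩ := h
    have hb := Nat.gcd_eq_gcd_ab j.val (2*n)
    refine ⟨c * Nat.gcdA j.val (2*n), ?_⟩
    rw [aux_a_zpow]
    congr 1
    have h3 : ((i.val : ℤ)) = (j.val * Nat.gcdA j.val (2*n) + (2*n : ℕ) * Nat.gcdB j.val (2*n)) * c := by
      rw [← hb, hc]; push_cast; rfl
    have h4 := congrArg (Int.cast : ℤ → ZMod (2*n)) h3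
    rw [hi] at h4
    have : (((2*n : ℕ) : ℤ) : ZMod (2*n)) = 0 := by
      rw [Int.cast_natCast]; exact ZMod.natCast_self _
    rw [Int.cast_mul, Int.cast_add, Int.cast_mul, Int.cast_mul, hj, this, Int.cast_natCast] at h4
    rw [h4]; push_cast; ring

lemma aux_E_cast {n d : ℕ} (hd : d ∣ 2*n) : auxE (n := n) (d : ZMod (2*n)) = d := by
  unfold auxE
  rw [ZMod.val_natCast]
  rw [← Nat.gcd_rec, Nat.gcd_comm]; exact Nat.gcd_eq_left hd

open QuaternionGroup in
lemma aux_adj_a {n : ℕ} (hn : 1 ≤ n) (i j : ZMod (2*n)) :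
    (powerGraph (QuaternionGroup n)).Adj (a i) (a j) ↔
      i ≠ j ∧ (auxE i ∣ auxE j ∨ auxE j ∣ auxE i) := by
  simp only [powerGraph, SimpleGraph.fromRel_adj, aux_mem_s14 hn]
  simp [or_comm]

open QuaternionGroup in
lemma aux_not_chordal {n : ℕ} (hn : 1 ≤ n) (m : ℕ) (hm : 4 ≤ m) (g : Fin m → ℕ)
    (hg : ∀ i, g i ∣ 2*n) (hinj : ∀ i j, i ≠ j → g i ≠ g j)
    (h : ∀ i j, i ≠ j → ((g i ∣ g j ∨ g j ∣ g i) ↔ (SimpleGraph.cycleGraph m).Adj i j)) :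
    ¬ IsChordal (powerGraph (QuaternionGroup n)) := by
  intro hc
  have hne : ∀ i j, i ≠ j → ((g i : ℕ) : ZMod (2*n)) ≠ (g j : ℕ) := by
    intro i j hij he
    have := congrArg auxE he
    rw [aux_E_cast (hg i), aux_E_cast (hg j)] at this
    exact hinj i j hij this
  refine (hc m hm).false ⟨⟨fun i => a (g i : ZMod (2*n)), ?_⟩, ?_⟩
  · intro i j hij
    by_contra hh
    exact hne i j hh (by simpa using hij)
  · intro i j
    change (powerGraph (QuaternionGroup n)).Adj (a (g i : ZMod (2*n))) (a (g j : ZMod (2*n))) ↔ _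
    rw [aux_adj_a hn, aux_E_cast (hg i), aux_E_cast (hg j)]
    by_cases hij : i = j
    · subst hij; simp
    · rw [h i j hij]; simp [hne i j hij]

open QuaternionGroup in
lemma aux_xa_nbr {n : ℕ} (hn : 1 ≤ n) (k : ZMod (2*n)) (w : QuaternionGroup n)
    (h : (powerGraph (QuaternionGroup n)).Adj (xa k) w) :
    w = 1 ∨ w = a n ∨ w = xa ((n : ZMod (2*n)) + k) := by
  have : NeZero n := ⟨by omega⟩
  have hnn : (n : ZMod (2*n)) + n = 0 := by
    have := ZMod.natCast_self (2*n)
    push_cast at this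
    rw [← this]; ring
  have key : ∀ (l : ZMod (2*n)) (z : QuaternionGroup n), z ∈ Subgroup.zpowers (xa l : QuaternionGroup n) →
      z = 1 ∨ z = xa l ∨ z = a n ∨ z = xa ((n : ZMod (2*n)) + l) := by
    intro l z hz
    rw [← mem_powers_iff_mem_zpowers] at hz
    obtain ⟨t, ht⟩ := hz
    simp only at ht
    rw [← pow_mod_orderOf, orderOf_xa] at ht
    have : t % 4 < 4 := Nat.mod_lt _ (by norm_num)
    generalize t % 4 = s at *
    interval_cases s
    · left; simpa using ht.symm
    · right; left; simpa using ht.symm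
    · right; right; left; rw [← ht, xa_sq]
    · right; right; right; rw [← ht, pow_succ, xa_sq, a_mul_xa]
      congr 1
      linear_combination -hnn
  rw [powerGraph, SimpleGraph.fromRel_adj] at h
  obtain ⟨hne, h | h⟩ := h
  · cases w with
    | a i =>
      rw [Subgroup.mem_zpowers_iff] at h
      obtain ⟨c, hc⟩ := h
      rw [aux_a_zpow] at hc
      cases hc
    | xa i =>
      rcases key _ _ h with h | h | h | h
      · cases h
      · exact absurd h hne
      · cases h
      · right; right
        have h : k = n + i := by simpa using h
        rw [h]
        congr 1
        linear_combination -hnn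
  · rcases key _ _ h with h | h | h | h
    · exact Or.inl h
    · exact absurd h.symm hne
    · exact Or.inr (Or.inl h)
    · exact Or.inr (Or.inr h)

open QuaternionGroup in
lemma aux_xa_simplicial {n : ℕ} (hn : 1 ≤ n) (k : ZMod (2*n)) (w v : QuaternionGroup n)
    (hw : (powerGraph (QuaternionGroup n)).Adj (xa k) w)
    (hv : (powerGraph (QuaternionGroup n)).Adj (xa k) v) (hne : w ≠ v) :
    (powerGraph (QuaternionGroup n)).Adj w v := by
  have h2 : (a n : QuaternionGroup n) ∈ Subgroup.zpowers (xa ((n : ZMod (2*n)) + k) : QuaternionGroup n) := by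
    rw [← xa_sq ((n : ZMod (2*n)) + k)]; exact Subgroup.npow_mem_zpowers _ _
  rw [powerGraph, SimpleGraph.fromRel_adj]
  refine ⟨hne, ?_⟩
  rcases aux_xa_nbr hn k w hw with rfl | rfl | rfl
  · exact Or.inl (one_mem _)
  · rcases aux_xa_nbr hn k v hv with rfl | rfl | rfl
    · exact Or.inr (one_mem _)
    · exact absurd rfl hne
    · exact Or.inl h2
  · rcases aux_xa_nbr hn k v hv with rfl | rfl | rfl
    · exact Or.inr (one_mem _)
    · exact Or.inr h2
    · exact absurd rfl hne

lemma aux_comb (m : ℕ) (hm : 4 ≤ m) (U V : Fin m → ℕ) (hV : ∀ i, V i ≤ 1)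
    (h : ∀ i j, i ≠ j → (((U i ≤ U j ∧ V i ≤ V j) ∨ (U j ≤ U i ∧ V j ≤ V i)) ↔
      (SimpleGraph.cycleGraph m).Adj i j)) : False := by
  have key : ∀ i j, i ≠ j → ¬ (SimpleGraph.cycleGraph m).Adj i j → V i ≠ V j := by
    intro i j hij hn
    rw [← h i j hij] at hn
    omega
  obtain rfl | rfl | hm6 : m = 4 ∨ m = 5 ∨ 6 ≤ m := by omega
  · have h02 := (h 0 2 (by decide)).not.2 (by decide)
    have h13 := (h 1 3 (by decide)).not.2 (by decide)
    have h01 := (h 0 1 (by decide)).2 (by decide)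
    have h12 := (h 1 2 (by decide)).2 (by decide)
    have h23 := (h 2 3 (by decide)).2 (by decide)
    have h03 := (h 0 3 (by decide)).2 (by decide)
    have := hV 0
    have := hV 1
    have := hV 2
    have := hV 3
    omega
  · have h02 := key 0 2 (by decide) (by decide)
    have h13 := key 1 3 (by decide) (by decide)
    have h24 := key 2 4 (by decide) (by decide)
    have h30 := key 3 0 (by decide) (by decide)
    have h41 := key 4 1 (by decide) (by decide)
    have := hV 0
    have := hV 1
    have := hV 2
    have := hV 3
    have := hV 4
    omega
  · have nadj : ∀ s t : Fin m, s.val + 2 ≤ t.val → t.val ≤ 4 → V s ≠ V t := by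
      intro s t h1 h2
      apply key
      · rintro rfl; omega
      · rw [SimpleGraph.cycleGraph_adj', Fin.sub_def, Fin.sub_def]
        simp only
        rintro (h3 | h3)
        · rw [Nat.mod_eq_of_lt (by omega)] at h3; omega
        · rw [show m - s.val + t.val = (t.val - s.val) + m by omega, Nat.add_mod_right,
            Nat.mod_eq_of_lt (by omega)] at h3; omega
    have h1 := nadj ⟨0, by omega⟩ ⟨2, by omega⟩ (by simp) (by simp)
    have h2 := nadj ⟨0, by omega⟩ ⟨4, by omega⟩ (by simp) (by simp)
    have h3 := nadj ⟨2, by omega⟩ ⟨4, by omega⟩ (by simp) (by simp)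
    have := hV ⟨0, by omega⟩
    have := hV ⟨2, by omega⟩
    have := hV ⟨4, by omega⟩
    omega

lemma aux_dvd {q r u v u' v' : ℕ} (hq : q.Prime) (hr : r.Prime) (hqr : q ≠ r) :
    q ^ u * r ^ v ∣ q ^ u' * r ^ v' ↔ u ≤ u' ∧ v ≤ v' := by
  have hc := (Nat.coprime_primes hq hr).2 hqr
  constructor
  · intro h
    constructor
    · have h1 := ((hc.pow u v').dvd_of_dvd_mul_right ((dvd_mul_right _ _).trans h))
      exact (Nat.pow_dvd_pow_iff_le_right hq.one_lt).1 h1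
    · have h1 := ((hc.symm.pow v u').dvd_of_dvd_mul_left ((dvd_mul_left _ _).trans h))
      exact (Nat.pow_dvd_pow_iff_le_right hr.one_lt).1 h1
  · rintro ⟨h1, h2⟩
    exact mul_dvd_mul (pow_dvd_pow _ h1) (pow_dvd_pow _ h2)

open QuaternionGroup Fin.CommRing in
lemma aux_chordal_s14 {n : ℕ} (hn : 1 ≤ n) {q r s t : ℕ} (hq : q.Prime) (hr : r.Prime) (hqr : q ≠ r)
    (hN : 2 * n = q ^ s * r ^ t) (ht : t ≤ 1) : IsChordal (powerGraph (QuaternionGroup n)) := by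
  intro m hm
  refine ⟨fun f => ?_⟩
  have hadj : ∀ i j, (powerGraph (QuaternionGroup n)).Adj (f i) (f j) ↔
    (SimpleGraph.cycleGraph m).Adj i j := fun i j => f.map_rel_iff
  have hinj : ∀ i j, f i = f j → i = j := fun i j h => f.injective h
  have hA : ∀ i, ∃ k, f i = a k := by
    intro i
    cases hfi : f i with
    | a k => exact ⟨k, rfl⟩
    | xa k =>
      exfalso
      obtain ⟨m, rfl⟩ : ∃ m', m = m' + 4 := ⟨m - 4, by omega⟩
      have e2 : (2 : Fin (m+4)) ≠ 1 := by
        intro h; have := congrArg Fin.val h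
        simp at this
        rw [Nat.mod_eq_of_lt (by omega)] at this; omega
      have e3 : (3 : Fin (m+4)) ≠ 0 := by
        intro h; have := congrArg Fin.val h
        simp at this
        rw [Nat.mod_eq_of_lt (by omega)] at this; omega
      have e1 : (2 : Fin (m+4)) ≠ 0 := by
        intro h; have := congrArg Fin.val h
        simp at this
        rw [Nat.mod_eq_of_lt (by omega)] at this; omega
      have hc : ∀ u v : Fin (m+4), (SimpleGraph.cycleGraph (m+4)).Adj u v ↔ u - v = 1 ∨ v - u = 1 :=
        fun u v => SimpleGraph.cycleGraph_adj
      have a1 : (powerGraph (QuaternionGroup n)).Adj (f i) (f (i+1)) := by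
        rw [hadj, hc]; right; ring
      have a2 : (powerGraph (QuaternionGroup n)).Adj (f i) (f (i-1)) := by
        rw [hadj, hc]; left; ring
      rw [hfi] at a1 a2
      have := aux_xa_simplicial hn k _ _ a1 a2 (by
        intro h
        have := hinj _ _ h
        apply e1
        linear_combination this)
      rw [hadj, hc] at this
      rcases this with h | h
      · apply e2; linear_combination h
      · apply e3; linear_combination -h
  choose k hk using hA
  have hE : ∀ i, ∃ u v, v ≤ 1 ∧ auxE (k i) = q ^ u * r ^ v := by
    intro i
    have : auxE (k i) ∣ q ^ s * r ^ t := hN ▸ Nat.gcd_dvd_right _ _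
    obtain ⟨x, y, hx, hy, hxy⟩ := (Nat.dvd_mul).1 this
    obtain ⟨u, hu, rfl⟩ := (Nat.dvd_prime_pow hq).1 hx
    obtain ⟨v, hv, rfl⟩ := (Nat.dvd_prime_pow hr).1 hy
    exact ⟨u, v, hv.trans ht, hxy.symm⟩
  choose U V hV hUV using hE
  refine aux_comb m hm U V hV ?_
  intro i j hij
  have hkk : k i ≠ k j := fun h => hij (hinj _ _ (by rw [hk, hk, h]))
  rw [← hadj, hk, hk, aux_adj_a hn, hUV, hUV, aux_dvd hq hr hqr, aux_dvd hq hr hqr]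
  simp [hkk]

lemma aux_four {n p : ℕ} (hn : 1 ≤ n) (hp : p.Prime) (ho : Odd p) (h4 : 4 * p ∣ 2 * n)
    (hp2 : 2 * p ^ 2 ∣ 2 * n) : ¬ IsChordal (powerGraph (QuaternionGroup n)) := by
  have hp3 : p ≠ 2 := by rintro rfl; revert ho; decide
  have hp2' := hp.two_le
  have n1 : ¬ 2 ∣ p := by rw [Nat.prime_dvd_prime_iff_eq Nat.prime_two hp]; exact hp3.symm
  have n2 : ¬ p ∣ 2 := by rw [Nat.prime_dvd_prime_iff_eq hp Nat.prime_two]; exact hp3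
  have n3 : ¬ 4 * p ∣ 2 * p ^ 2 := by
    rw [show 4 * p = (2 * p) * 2 by ring, show 2 * p ^ 2 = (2 * p) * p by ring,
      Nat.mul_dvd_mul_iff_left (by omega)]; exact n1
  have n4 : ¬ 2 * p ^ 2 ∣ 4 * p := by
    rw [show 4 * p = (2 * p) * 2 by ring, show 2 * p ^ 2 = (2 * p) * p by ring,
      Nat.mul_dvd_mul_iff_left (by omega)]; exact n2
  have y1 : 2 ∣ 4 * p := ⟨2 * p, by ring⟩
  have y2 : p ∣ 4 * p := ⟨4, by ring⟩
  have y3 : 2 ∣ 2 * p ^ 2 := ⟨p ^ 2, by ring⟩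
  have y4 : p ∣ 2 * p ^ 2 := ⟨2 * p, by ring⟩
  have z1 : 2 ≠ 4 * p := by omega
  have z2 : p ≠ 4 * p := by omega
  have z3 : 2 ≠ 2 * p ^ 2 := by nlinarith
  have z4 : p ≠ 2 * p ^ 2 := by nlinarith
  have z5 : 4 * p ≠ 2 * p ^ 2 := fun h => n3 (h ▸ dvd_rfl)
  refine aux_not_chordal hn 4 le_rfl ![2, 4 * p, p, 2 * p ^ 2] ?_ ?_ ?_
  · intro i
    fin_cases i
    · exact y1.trans h4
    · exact h4
    · exact y2.trans h4
    · exact hp2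
  · intro i j hij
    fin_cases i <;> fin_cases j <;> first | exact absurd rfl hij | (simp only [Fin.reduceFinMk]; simp; omega)
  · intro i j hij
    fin_cases i <;> fin_cases j <;> first
      | exact absurd rfl hij
      | (refine iff_of_true ?_ (by decide); first | exact Or.inl ‹_› | exact Or.inr ‹_›)
      | (refine iff_of_false ?_ (by decide); exact not_or.2 ⟨‹_›, ‹_›⟩)

lemma aux_six {n x p q : ℕ} (hn : 1 ≤ n) (hx : x.Prime) (hp : p.Prime) (hq : q.Prime)
    (hxp : x ≠ p) (hxq : x ≠ q) (hpq : p ≠ q)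
    (h1 : x ∣ 2 * n) (h2 : p ∣ 2 * n) (h3 : q ∣ 2 * n) :
    ¬ IsChordal (powerGraph (QuaternionGroup n)) := by
  have P1 : ∀ {a b : ℕ}, a.Prime → b.Prime → a ≠ b → ¬ a ∣ b := by
    intro a b ha hb hab
    rwa [Nat.prime_dvd_prime_iff_eq ha hb]
  have P2 : ∀ {a b c : ℕ}, a.Prime → b.Prime → c.Prime → a ≠ b → a ≠ c → ¬ a ∣ b * c := by
    intro a b c ha hb hc hab hac
    rw [ha.dvd_mul]
    exact not_or.2 ⟨P1 ha hb hab, P1 ha hc hac⟩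
  have PL : ∀ {a b c : ℕ}, ¬ a ∣ c → ¬ a * b ∣ c := fun h h' => h ((dvd_mul_right _ _).trans h')
  have PR : ∀ {a b c : ℕ}, ¬ b ∣ c → ¬ a * b ∣ c := fun h h' => h ((dvd_mul_left _ _).trans h')
  have nxp := P1 hx hp hxp
  have npx := P1 hp hx hxp.symm
  have nxq := P1 hx hq hxq
  have nqx := P1 hq hx hxq.symm
  have npq := P1 hp hq hpq
  have nqp := P1 hq hp hpq.symm
  have n1 := P2 hx hp hq hxp hxq
  have n2 := P2 hp hx hq hxp.symm hpq
  have n3 := P2 hq hx hp hxq.symm hpq.symm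
  have m1 : ¬ p * q ∣ x := PL npx
  have m2 : ¬ x * q ∣ p := PL nxp
  have m3 : ¬ x * p ∣ q := PL nxq
  have k1 : ¬ x * p ∣ p * q := PL n1
  have k2 : ¬ x * p ∣ x * q := PR n2
  have k3 : ¬ x * q ∣ p * q := PL n1
  have k4 : ¬ x * q ∣ x * p := PR n3
  have k5 : ¬ p * q ∣ x * p := PR n3
  have k6 : ¬ p * q ∣ x * q := PL n2
  have y1 : x ∣ x * p := dvd_mul_right _ _
  have y2 : p ∣ x * p := dvd_mul_left _ _
  have y3 : p ∣ p * q := dvd_mul_right _ _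
  have y4 : q ∣ p * q := dvd_mul_left _ _
  have y5 : q ∣ x * q := dvd_mul_left _ _
  have y6 : x ∣ x * q := dvd_mul_right _ _
  have w1 : ¬ x * p ∣ x := PR npx
  have w2 : ¬ x * p ∣ p := PL nxp
  have w3 : ¬ p * q ∣ p := PR nqp
  have w4 : ¬ p * q ∣ q := PL npq
  have w5 : ¬ x * q ∣ q := PL nxq
  have w6 : ¬ x * q ∣ x := PR nqx
  have L : ∀ {a b : ℕ}, a.Prime → b.Prime → a ≠ b → a ∣ 2 * n → b ∣ 2 * n → a * b ∣ 2 * n :=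
    fun ha hb hab h h' => ((Nat.coprime_primes ha hb).2 hab).mul_dvd_of_dvd_of_dvd h h'
  have NE : ∀ {a b : ℕ}, ¬ a ∣ b → a ≠ b := fun h h' => h (h' ▸ dvd_rfl)
  refine aux_not_chordal hn 6 (by norm_num) ![x, x * p, p, p * q, q, x * q] ?_ ?_ ?_
  · intro i
    fin_cases i
    · exact h1
    · exact L hx hp hxp h1 h2
    · exact h2
    · exact L hp hq hpq h2 h3
    · exact h3
    · exact L hx hq hxq h1 h3
  · intro i j hij
    fin_cases i <;> fin_cases j <;> first
      | exact absurd rfl hij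
      | exact NE ‹_› | exact (NE ‹_›).symm
  · intro i j hij
    fin_cases i <;> fin_cases j <;> first
      | exact absurd rfl hij
      | (refine iff_of_true ?_ (by decide); first | exact Or.inl ‹_› | exact Or.inr ‹_›)
      | (refine iff_of_false ?_ (by decide); exact not_or.2 ⟨‹_›, ‹_›⟩)

theorem stmt14 (n : ℕ) (hn : 1 ≤ n) :
    IsChordal (powerGraph (QuaternionGroup n)) ↔
      ∃ (p a b : ℕ), p.Prime ∧ Odd p ∧ 2 * n = 2 ^ a * p ^ b ∧ (a ≤ 1 ∨ b ≤ 1) := by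
  constructor
  · intro hc
    obtain ⟨a, m, hm, hN⟩ := Nat.exists_eq_two_pow_mul_odd (n := 2 * n) (by omega)
    have hmN : m ∣ 2 * n := ⟨2 ^ a, by rw [hN, mul_comm]⟩
    have hodd : ∀ p, p ∣ m → Odd p := fun p hp => Odd.of_dvd_nat hm hp
    have hne2 : ∀ p, Odd p → 2 ≠ p := by rintro p hp rfl; revert hp; decide
    obtain ⟨p, hp, hpo, hpu⟩ : ∃ p, p.Prime ∧ Odd p ∧ ∀ q, q.Prime → q ∣ m → q = p := by
      by_cases h1 : m = 1
      · refine ⟨3, Nat.prime_three, by decide, ?_⟩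
        intro q hq hqm
        rw [h1] at hqm
        exact absurd (Nat.dvd_one.1 hqm) hq.one_lt.ne'
      · obtain ⟨p, hp, hpm⟩ := Nat.exists_prime_and_dvd h1
        refine ⟨p, hp, hodd p hpm, ?_⟩
        intro q hq hqm
        by_contra hqp
        exact aux_six hn Nat.prime_two hq hp (hne2 _ (hodd _ hqm)) (hne2 _ (hodd _ hpm)) hqp
          (dvd_mul_right _ _) (hqm.trans hmN) (hpm.trans hmN) hc
    have hm0 : m ≠ 0 := by rintro rfl; revert hm; decide
    have hmp := Nat.eq_prime_pow_of_unique_prime_dvd hm0 (fun {d} hd hdm => hpu d hd hdm)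
    generalize m.primeFactorsList.length = b at hmp
    subst hmp
    refine ⟨p, a, b, hp, hpo, hN, ?_⟩
    by_contra hab
    push Not at hab
    refine aux_four hn hp hpo ?_ ?_ hc
    · rw [hN]
      exact mul_dvd_mul (pow_dvd_pow 2 (show 2 ≤ a by omega)) (dvd_pow_self p (by omega))
    · rw [hN]
      exact mul_dvd_mul (dvd_pow_self 2 (by omega)) (pow_dvd_pow p (show 2 ≤ b by omega))
  · rintro ⟨p, a, b, hp, ho, hN, hab⟩
    have hp2 : p ≠ 2 := by rintro rfl; revert ho; decide
    rcases hab with h | h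
    · exact aux_chordal_s14 hn hp Nat.prime_two hp2 (by rw [hN, mul_comm]) h
    · exact aux_chordal_s14 hn Nat.prime_two hp hp2.symm hN h
end

section
/- Let G be a finite group and let a, b, c, d ∈ G be pairwise distinct elements forming an induced 4-cycle in the power graph of G (a–b, b–c, c–d, d–a are edges while a–c and b–d are not). Then the subgroup U = ⟨a, b, c, d⟩ generated by the four vertices has a normal cyclic subgroup that is nontrivial and proper in U. -/
/-- Four pairwise distinct vertices forming an induced 4-cycle in the power graph. -/
def IsInducedFourCycle {G : Type*} [Group G] (a b c d : G) : Prop :=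
  a ≠ b ∧ a ≠ c ∧ a ≠ d ∧ b ≠ c ∧ b ≠ d ∧ c ≠ d ∧
    (powerGraph G).Adj a b ∧ (powerGraph G).Adj b c ∧ (powerGraph G).Adj c d ∧
    (powerGraph G).Adj d a ∧ ¬ (powerGraph G).Adj a c ∧ ¬ (powerGraph G).Adj b d

theorem key17 {G : Type*} [Group G] (S : Set G) (a b c d : G)
    (hS : ∀ x ∈ S, x = a ∨ x = b ∨ x = c ∨ x = d) (haS : a ∈ S) (hcS : c ∈ S)
    (hab : a ∈ Subgroup.zpowers b) (had : a ∈ Subgroup.zpowers d)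
    (hcb : c ∈ Subgroup.zpowers b)
    (hac : a ∉ Subgroup.zpowers c) (hca : c ∉ Subgroup.zpowers a) :
    ∃ N : Subgroup G, N ≤ Subgroup.closure S ∧ IsCyclic N ∧
      N ≠ ⊥ ∧ N ≠ Subgroup.closure S ∧
      ∀ u ∈ Subgroup.closure S, ∀ x ∈ N, u * x * u⁻¹ ∈ N := by
  refine ⟨Subgroup.zpowers a, ?_, inferInstance, ?_, ?_, ?_⟩
  · rw [Subgroup.zpowers_le]
    exact Subgroup.subset_closure haS
  · intro h
    rw [Subgroup.zpowers_eq_bot] at h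
    exact hac (h ▸ Subgroup.one_mem _)
  · intro h
    exact hca (h ▸ Subgroup.subset_closure hcS)
  · have hle : Subgroup.closure S ≤ Subgroup.centralizer {a} := by
      rw [Subgroup.closure_le]
      intro x hx
      rw [SetLike.mem_coe, Subgroup.mem_centralizer_singleton_iff]
      obtain ⟨m, rfl⟩ := Subgroup.mem_zpowers_iff.1 hab
      obtain ⟨n, hn⟩ := Subgroup.mem_zpowers_iff.1 had
      obtain ⟨k, rfl⟩ := Subgroup.mem_zpowers_iff.1 hcb
      rcases hS x hx with rfl | rfl | rfl | rfl
      · rfl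
      · exact (Commute.self_zpow _ _).eq
      · exact (Commute.zpow_zpow_self _ _ _).eq
      · rw [← hn]
        exact (Commute.self_zpow _ _).eq
    intro u hu x hx
    obtain ⟨k, rfl⟩ := Subgroup.mem_zpowers_iff.1 hx
    have h : Commute u a := Subgroup.mem_centralizer_singleton_iff.1 (hle hu)
    rw [(h.zpow_right k).eq, mul_inv_cancel_right]
    exact hx

theorem stmt17 (G : Type*) [Group G] [Fintype G] (a b c d : G)
    (hcyc : IsInducedFourCycle a b c d) :
    ∃ N : Subgroup G, N ≤ Subgroup.closure {a, b, c, d} ∧ IsCyclic N ∧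
      N ≠ ⊥ ∧ N ≠ Subgroup.closure {a, b, c, d} ∧
      ∀ u ∈ Subgroup.closure ({a, b, c, d} : Set G), ∀ x ∈ N, u * x * u⁻¹ ∈ N := by
  have T : ∀ x y z : G, x ∈ Subgroup.zpowers y → y ∈ Subgroup.zpowers z →
      x ∈ Subgroup.zpowers z := fun x y z h1 h2 => (Subgroup.zpowers_le.2 h2) h1
  obtain ⟨h1, h2, h3, h4, h5, h6, e1, e2, e3, e4, n1, n2⟩ := hcyc
  simp only [powerGraph, SimpleGraph.fromRel_adj, not_and_or, not_or, h2, h5, ne_eq,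
    not_true_eq_false, not_false_eq_true, false_or] at e1 e2 e3 e4 n1 n2
  obtain ⟨-, e1⟩ := e1
  obtain ⟨-, e2⟩ := e2
  obtain ⟨-, e3⟩ := e3
  obtain ⟨-, e4⟩ := e4
  have t1 := T a b c
  have t2 := T c b a
  have t3 := T b c d
  have t4 := T d c b
  have t5 := T c d a
  have t6 := T a d c
  have t7 := T d a b
  have t8 := T b a d
  by_cases h : a ∈ Subgroup.zpowers b
  · exact key17 _ a b c d (by simp) (by simp) (by simp) h (by grind) (by grind) n1.1 n1.2
  · exact key17 _ b a d c (by simp) (by simp) (by simp) (by grind) (by grind) (by grind)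
      n2.1 n2.2
end
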